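/- HyperLTL finite-state satisfiability is Σ⁰₁-complete: under a fixed computable injective encoding of HyperLTL sentences as natural numbers, the set of codes of HyperLTL sentences that are satisfied by the set of traces of some finite transition system is recursively enumerable, and every recursively enumerable set many-one reduces to it via a total computable function. -/

import Mathlib

/-! ### HyperLTL: syntax and semantics -/

/-- A trace over a set `AP` of atomic propositions. -/
abbrev Trace (AP : Type) : Type := ℕ → Set AP

/-- The suffix of a trace from position `j` onwards. -/
def Trace.shift {AP : Type} (t : Trace AP) (j : ℕ) : Trace AP := fun i => t (i + j)

/-- Quantifier-free HyperLTL formulas; trace variables are natural numbers. -/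
inductive QF (AP : Type) : Type where
  | atom : AP → ℕ → QF AP
  | neg  : QF AP → QF AP
  | disj : QF AP → QF AP → QF AP
  | next : QF AP → QF AP
  | untl : QF AP → QF AP → QF AP

/-- HyperLTL formulas: a block of trace quantifiers followed by a
quantifier-free formula (HyperLTL formulas are in prenex normal form). -/
inductive HFormula (AP : Type) : Type where
  | ex  : ℕ → HFormula AP → HFormula AP
  | all : ℕ → HFormula AP → HFormula AP
  | qf  : QF AP → HFormula AP

/-- The simultaneous shift of a trace assignment. -/
def shiftAsg {AP : Type} (As : ℕ → Trace AP) (j : ℕ) : ℕ → Trace AP :=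
  fun x => Trace.shift (As x) j

/-- Semantics of quantifier-free HyperLTL formulas w.r.t. a trace assignment. -/
def QF.sat {AP : Type} : QF AP → (ℕ → Trace AP) → Prop
  | .atom a x, As => a ∈ As x 0
  | .neg ψ, As => ¬ ψ.sat As
  | .disj ψ₁ ψ₂, As => ψ₁.sat As ∨ ψ₂.sat As
  | .next ψ, As => ψ.sat (shiftAsg As 1)
  | .untl ψ₁ ψ₂, As => ∃ j, ψ₂.sat (shiftAsg As j) ∧ ∀ j' < j, ψ₁.sat (shiftAsg As j')

/-- Semantics of HyperLTL formulas w.r.t. a set of traces and a trace assignment. -/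
def HFormula.sat {AP : Type} : HFormula AP → Set (Trace AP) → (ℕ → Trace AP) → Prop
  | .ex x φ, T, As => ∃ t ∈ T, φ.sat T (Function.update As x t)
  | .all x φ, T, As => ∀ t ∈ T, φ.sat T (Function.update As x t)
  | .qf ψ, _, As => ψ.sat As

def QF.freeVars {AP : Type} : QF AP → Set ℕ
  | .atom _ x => {x}
  | .neg ψ => ψ.freeVars
  | .disj ψ₁ ψ₂ => ψ₁.freeVars ∪ ψ₂.freeVars
  | .next ψ => ψ.freeVars
  | .untl ψ₁ ψ₂ => ψ₁.freeVars ∪ ψ₂.freeVars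

def HFormula.freeVars {AP : Type} : HFormula AP → Set ℕ
  | .ex x φ => φ.freeVars \ {x}
  | .all x φ => φ.freeVars \ {x}
  | .qf ψ => ψ.freeVars

/-- A sentence is a formula without free variables. -/
def HFormula.IsSentence {AP : Type} (φ : HFormula AP) : Prop := φ.freeVars = ∅

/-- `T` is a model of `φ` (for sentences the initial assignment is irrelevant). -/
def HModels {AP : Type} (T : Set (Trace AP)) (φ : HFormula AP) : Prop :=
  φ.sat T (fun _ _ => ∅)

/-- A HyperLTL sentence is satisfiable if it has a model. -/
def HSatisfiable {AP : Type} (φ : HFormula AP) : Prop := ∃ T, HModels T φ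

/-! ### A fixed computable injective encoding of HyperLTL formulas -/

def QF.codeWith {AP : Type} (e : AP → ℕ) : QF AP → ℕ
  | .atom a x => Nat.pair 0 (Nat.pair (e a) x)
  | .neg ψ => Nat.pair 1 (ψ.codeWith e)
  | .disj ψ₁ ψ₂ => Nat.pair 2 (Nat.pair (ψ₁.codeWith e) (ψ₂.codeWith e))
  | .next ψ => Nat.pair 3 (ψ.codeWith e)
  | .untl ψ₁ ψ₂ => Nat.pair 4 (Nat.pair (ψ₁.codeWith e) (ψ₂.codeWith e))

def HFormula.codeWith {AP : Type} (e : AP → ℕ) : HFormula AP → ℕ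
  | .ex x φ => Nat.pair 0 (Nat.pair x (φ.codeWith e))
  | .all x φ => Nat.pair 1 (Nat.pair x (φ.codeWith e))
  | .qf ψ => Nat.pair 2 (ψ.codeWith e)

/-- `A` many-one reduces to `B` via a total computable function. -/
def ManyOneRed (A B : Set ℕ) : Prop :=
  ∃ f : ℕ → ℕ, Computable f ∧ ∀ x, x ∈ A ↔ f x ∈ B

/-! ### Transition systems -/

/-- A transition system over `AP`: every vertex has an outgoing edge. -/
structure TS (AP : Type) : Type 1 where
  V : Type
  E : V → V → Prop
  vI : V
  lab : V → Set AP
  succ : ∀ v, ∃ w, E v w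

def TS.IsPath {AP : Type} (S : TS AP) (ρ : ℕ → S.V) : Prop :=
  ∀ i, S.E (ρ i) (ρ (i + 1))

/-- The set of traces of a transition system: traces of paths starting at the
initial vertex. -/
def TS.traces {AP : Type} (S : TS AP) : Set (Trace AP) :=
  {t | ∃ ρ : ℕ → S.V, S.IsPath ρ ∧ ρ 0 = S.vI ∧ t = fun i => S.lab (ρ i)}

/-- A set of naturals is Σ⁰₁ (recursively enumerable) iff it is the domain of a
partial computable function. -/
def IsRE (N : Set ℕ) : Prop :=
  ∃ f : ℕ →. ℕ, Nat.Partrec f ∧ ∀ n, n ∈ N ↔ (f n).Dom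

/-- The set of codes of HyperLTL sentences satisfied by the set of traces of
some finite transition system. -/
def FinStateSatCodes : Set ℕ :=
  {n : ℕ | ∃ φ : HFormula ℕ, φ.IsSentence ∧ HFormula.codeWith id φ = n ∧
    ∃ S : TS ℕ, Finite S.V ∧ HModels S.traces φ}


namespace HL

/-! ## Part 1: recognizability and ultimately periodic witnesses -/

/-- Joint words: position, then variable, gives a state (a number). -/
abbrev JW : Type := ℕ → ℕ → ℕ

def sh (w : JW) (j : ℕ) : JW := fun i => w (i + j)

theorem sh_sh (w : JW) (a b : ℕ) : sh (sh w a) b = sh w (a + b) := by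
  funext i; simp only [sh]; congr 1; omega

@[simp] theorem sh_zero (w : JW) : sh w 0 = w := rfl

structure Rec (L : JW → Prop) {C : Type} (h : ℕ → JW → C) : Prop where
  loc : ∀ n w w', (∀ i < n, w i = w' i) → h n w = h n w'
  cong : ∀ n k n' k' w w', 0 < n → 0 < k → 0 < n' → 0 < k' → h n w = h n' w' →
    h k (sh w n) = h k' (sh w' n') → h (n + k) w = h (n' + k') w'
  sat : ∀ (c c' : ℕ → ℕ) w w', c 0 = 0 → c' 0 = 0 → StrictMono c → StrictMono c' →
    (∀ i, h (c (i + 1) - c i) (sh w (c i)) = h (c' (i + 1) - c' i) (sh w' (c' i))) →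
    L w → L w'

theorem Rec.neg {L : JW → Prop} {C : Type} {h : ℕ → JW → C} (R : Rec L h) :
    Rec (fun w => ¬ L w) h where
  loc := R.loc
  cong := R.cong
  sat c c' w w' h0 h0' hc hc' heq hL hL' :=
    hL (R.sat c' c w' w h0' h0 hc' hc (fun i => (heq i).symm) hL')

theorem Rec.inter {L L' : JW → Prop} {C C' : Type} {h : ℕ → JW → C} {h' : ℕ → JW → C'}
    (R : Rec L h) (R' : Rec L' h') :
    Rec (fun w => L w ∧ L' w) (fun n w => (h n w, h' n w)) where
  loc n w w' e := by rw [R.loc n w w' e, R'.loc n w w' e]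
  cong n k n' k' w w' h1 h2 h3 h4 e1 e2 := by
    simp only [Prod.mk.injEq] at e1 e2 ⊢
    exact ⟨R.cong n k n' k' w w' h1 h2 h3 h4 e1.1 e2.1,
      R'.cong n k n' k' w w' h1 h2 h3 h4 e1.2 e2.2⟩
  sat c c' w w' h0 h0' hc hc' heq hL := by
    simp only [Prod.mk.injEq] at heq
    exact ⟨R.sat c c' w w' h0 h0' hc hc' (fun i => (heq i).1) hL.1,
      R'.sat c c' w w' h0 h0' hc hc' (fun i => (heq i).2) hL.2⟩

theorem Rec.union {L L' : JW → Prop} {C C' : Type} {h : ℕ → JW → C} {h' : ℕ → JW → C'}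
    (R : Rec L h) (R' : Rec L' h') :
    Rec (fun w => L w ∨ L' w) (fun n w => (h n w, h' n w)) where
  loc := (R.inter R').loc
  cong := (R.inter R').cong
  sat c c' w w' h0 h0' hc hc' heq hL := by
    simp only [Prod.mk.injEq] at heq
    exact hL.imp (R.sat c c' w w' h0 h0' hc hc' (fun i => (heq i).1))
      (R'.sat c c' w w' h0 h0' hc hc' (fun i => (heq i).2))

theorem exists_block (c : ℕ → ℕ) (h0 : c 0 = 0) (hc : StrictMono c) (j : ℕ) :
    ∃ k, c k ≤ j ∧ j < c (k + 1) := by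
  induction j with
  | zero => exact ⟨0, by omega, by have := hc (Nat.lt_succ_self 0); simp at this ⊢; omega⟩
  | succ j ih =>
    obtain ⟨k, h1, h2⟩ := ih
    by_cases h : j + 1 < c (k + 1)
    · exact ⟨k, by omega, h⟩
    · refine ⟨k + 1, by omega, ?_⟩
      have := hc (Nat.lt_succ_self (k + 1))
      simp only [Nat.succ_eq_add_one] at this
      omega

theorem Rec.suffix {L : JW → Prop} {C : Type} {h : ℕ → JW → C} (R : Rec L h)
    {c c' : ℕ → ℕ} {w w' : JW} (hc : StrictMono c) (hc' : StrictMono c')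
    (heq : ∀ i, h (c (i + 1) - c i) (sh w (c i)) = h (c' (i + 1) - c' i) (sh w' (c' i)))
    {k j k' j' : ℕ} (hk : k = k') (hj : j < c (k + 1)) (hj' : j' < c' (k' + 1))
    (e : h (c (k + 1) - j) (sh w j) = h (c' (k' + 1) - j') (sh w' j'))
    (hL : L (sh w j)) : L (sh w' j') := by
  subst hk
  have key : ∀ (c : ℕ → ℕ) (j : ℕ), StrictMono c → j < c (k + 1) →
      StrictMono (fun i => if i = 0 then 0 else c (k + i) - j) := by
    intro c j hc hj
    apply strictMono_nat_of_lt_succ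
    intro i
    by_cases hi : i = 0
    · subst hi; simp; omega
    · have h1 : c (k + 1) ≤ c (k + i) := hc.monotone (by omega)
      have h2 : c (k + i) < c (k + (i + 1)) := hc (by omega)
      simp [hi]; omega
  refine R.sat _ _ (sh w j) (sh w' j') (by simp) (by simp) (key c j hc hj) (key c' j' hc' hj') ?_ hL
  intro i
  by_cases hi : i = 0
  · subst hi; simpa using e
  · have h1 : c (k + 1) ≤ c (k + i) := hc.monotone (by omega)
    have h1' : c' (k + 1) ≤ c' (k + i) := hc'.monotone (by omega)
    have h2 := heq (k + i)
    simp only [hi, if_false, sh_sh, Nat.add_eq_zero_iff, one_ne_zero, and_false]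
    rw [← add_assoc k i 1]
    rw [show j + (c (k + i) - j) = c (k + i) by omega,
      show j' + (c' (k + i) - j') = c' (k + i) by omega,
      show c (k + i + 1) - j - (c (k + i) - j) = c (k + i + 1) - c (k + i) by omega,
      show c' (k + i + 1) - j' - (c' (k + i) - j') = c' (k + i + 1) - c' (k + i) by omega]
    exact h2

theorem Rec.atom (P : (ℕ → ℕ) → Prop) : Rec (fun w => P (w 0)) (fun n w => 0 < n ∧ P (w 0)) where
  loc n w w' e := by
    rcases Nat.eq_zero_or_pos n with h | h
    · simp [h]
    · simp [e 0 h]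
  cong n k n' k' w w' h1 h2 h3 h4 e1 _ := by
    simp only [h1, h3, true_and, Nat.add_pos_left] at e1 ⊢
    exact e1
  sat c c' w w' h0 h0' hc hc' heq hL := by
    have e := heq 0
    have a := hc (Nat.lt_succ_self 0)
    have a' := hc' (Nat.lt_succ_self 0)
    simp only [Nat.succ_eq_add_one, zero_add] at a a'
    simp only [h0, h0', zero_add, sh_zero, Nat.sub_zero] at e a a'
    have := e.mp ⟨a, hL⟩
    exact this.2

theorem Rec.next {L : JW → Prop} {C : Type} {h : ℕ → JW → C} (R : Rec L h) :
    Rec (fun w => L (sh w 1)) (fun n w => (h n w, h (n - 1) (sh w 1), (n = 1 : Prop))) where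
  loc n w w' e := by
    simp only [Prod.mk.injEq, and_true]
    exact ⟨R.loc n w w' e, R.loc _ _ _ (fun i hi => e (i + 1) (by omega))⟩
  cong n k n' k' w w' h1 h2 h3 h4 e1 e2 := by
    simp only [Prod.mk.injEq] at e1 e2 ⊢
    refine ⟨R.cong n k n' k' w w' h1 h2 h3 h4 e1.1 e2.1, ?_, ?_⟩
    · by_cases hn : n = 1
      · have hn' : n' = 1 := by simpa [hn] using e1.2.2
        subst hn; subst hn'
        simpa using e2.1
      · have hn' : n' ≠ 1 := by simpa [hn] using e1.2.2
        have := R.cong (n - 1) k (n' - 1) k' (sh w 1) (sh w' 1) (by omega) h2 (by omega) h4 e1.2.1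
          (by rw [sh_sh, sh_sh, show 1 + (n - 1) = n by omega, show 1 + (n' - 1) = n' by omega]
              exact e2.1)
        rw [show n + k - 1 = n - 1 + k by omega, show n' + k' - 1 = n' - 1 + k' by omega]
        exact this
    · apply propext
      constructor <;> intro <;> omega
  sat c c' w w' h0 h0' hc hc' heq hL := by
    simp only [Prod.mk.injEq] at heq
    have hb := fun i => (heq i).1
    have a := hc (Nat.lt_succ_self 0)
    have a' := hc' (Nat.lt_succ_self 0)
    have b := hc (Nat.lt_succ_self 1)
    have b' := hc' (Nat.lt_succ_self 1)
    have e := (heq 0).2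
    simp only [Nat.succ_eq_add_one, zero_add, Nat.reduceAdd] at a a' b b' e
    rw [h0] at a e
    rw [h0'] at a' e
    simp only [Nat.sub_zero, sh_zero] at e
    by_cases hn : c 1 = 1
    · have hn' : c' 1 = 1 := by simpa [hn] using e.2
      refine R.suffix (k := 1) hc hc' hb rfl (by simp; omega) (by simp; omega) ?_ hL
      have := hb 1
      rwa [hn, hn'] at this
    · have hn' : c' 1 ≠ 1 := by simpa [hn] using e.2
      exact R.suffix (k := 0) hc hc' hb rfl (by simp; omega) (by simp; omega) (by simpa using e.1) hL

/-- The class function for until. -/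
def uh {C D : Type} (h : ℕ → JW → C) (g : ℕ → JW → D) (n : ℕ) (w : JW) :
    C × D × Set C × Set (D × Set C) :=
  (h n w, g n w, {e | ∃ j < n, h (n - j) (sh w j) = e},
    {e | ∃ j < n, g (n - j) (sh w j) = e.1 ∧ ∀ j' < j, h (n - j') (sh w j') ∈ e.2})

theorem Rec.cong_sh {L : JW → Prop} {C : Type} {h : ℕ → JW → C} (R : Rec L h)
    {n k n' k' j j' : ℕ} {w w' : JW} (hj : j < n) (hj' : j' < n') (hk : 0 < k) (hk' : 0 < k')
    (e : h (n - j) (sh w j) = h (n' - j') (sh w' j'))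
    (e2 : h k (sh w n) = h k' (sh w' n')) :
    h (n + k - j) (sh w j) = h (n' + k' - j') (sh w' j') := by
  have := R.cong (n - j) k (n' - j') k' (sh w j) (sh w' j') (by omega) hk (by omega) hk' e
    (by rw [sh_sh, sh_sh, show j + (n - j) = n by omega, show j' + (n' - j') = n' by omega]
        exact e2)
  rwa [show n + k - j = n - j + k by omega, show n' + k' - j' = n' - j' + k' by omega]

theorem uh_cong_aux {L M : JW → Prop} {C D : Type} {h : ℕ → JW → C} {g : ℕ → JW → D}
    (R : Rec L h) (S : Rec M g) {n k n' k' : ℕ} {w w' : JW}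
    (h1 : 0 < n) (h2 : 0 < k) (h3 : 0 < n') (h4 : 0 < k')
    (e1 : uh h g n w = uh h g n' w') (e2 : uh h g k (sh w n) = uh h g k' (sh w' n')) :
    (uh h g (n + k) w).2.2.1 ⊆ (uh h g (n' + k') w').2.2.1 ∧
    (uh h g (n + k) w).2.2.2 ⊆ (uh h g (n' + k') w').2.2.2 := by
  simp only [uh, Prod.mk.injEq] at e1 e2 ⊢
  obtain ⟨a1, a2, a3, a4⟩ := e1
  obtain ⟨b1, b2, b3, b4⟩ := e2
  constructor
  · rintro e ⟨j, hj, rfl⟩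
    by_cases hjn : j < n
    · have : h (n - j) (sh w j) ∈ {e | ∃ j < n, h (n - j) (sh w j) = e} := ⟨j, hjn, rfl⟩
      rw [a3] at this
      obtain ⟨j', hj', ee⟩ := this
      exact ⟨j', by omega, R.cong_sh hj' hjn h4 h2 ee b1.symm⟩
    · have : h (k - (j - n)) (sh (sh w n) (j - n)) ∈
        {e | ∃ j < k, h (k - j) (sh (sh w n) j) = e} := ⟨j - n, by omega, rfl⟩
      rw [b3] at this
      obtain ⟨j', hj', ee⟩ := this
      refine ⟨n' + j', by omega, ?_⟩
      rw [sh_sh, sh_sh, show n + (j - n) = j by omega] at ee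
      rw [show n' + k' - (n' + j') = k' - j' by omega, ee]
      congr 1; omega
  · rintro ⟨e, A⟩ ⟨j, hj, rfl, hA⟩
    simp only at hA ⊢
    by_cases hjn : j < n
    · have : (g (n - j) (sh w j), {d | ∃ j' < j, h (n - j') (sh w j') = d}) ∈
        {e : D × Set C | ∃ j < n, g (n - j) (sh w j) = e.1 ∧
          ∀ j' < j, h (n - j') (sh w j') ∈ e.2} := ⟨j, hjn, rfl, fun j' hj' => ⟨j', hj', rfl⟩⟩
      rw [a4] at this
      obtain ⟨i, hi, ei, hi2⟩ := this
      refine ⟨i, by omega, S.cong_sh hi hjn h4 h2 ei b2.symm, fun i' hi' => ?_⟩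
      obtain ⟨j', hj', ej⟩ := hi2 i' hi'
      have := hA j' hj'
      rw [R.cong_sh (n' := n') (k' := k') (j' := i') (w' := w') (by omega) (by omega) h2 h4 ej b1]
        at this
      exact this
    · have : (g (n + k - j) (sh w j), A) ∈
        {e : D × Set C | ∃ j < k, g (k - j) (sh (sh w n) j) = e.1 ∧
          ∀ j' < j, h (k - j') (sh (sh w n) j') ∈ e.2} := by
        refine ⟨j - n, by omega, ?_, fun j' hj' => ?_⟩
        · rw [sh_sh, show n + (j - n) = j by omega, show k - (j - n) = n + k - j by omega]
        · rw [sh_sh]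
          have := hA (n + j') (by omega)
          rwa [show n + k - (n + j') = k - j' by omega] at this
      rw [b4] at this
      obtain ⟨i, hi, ei, hi2⟩ := this
      simp only [sh_sh] at ei hi2
      refine ⟨n' + i, by omega, ?_, fun i' hi' => ?_⟩
      · rw [← ei]; congr 1; omega
      · by_cases hin : i' < n'
        · have : h (n' - i') (sh w' i') ∈ {e | ∃ j < n', h (n' - j) (sh w' j) = e} :=
            ⟨i', hin, rfl⟩
          rw [← a3] at this
          obtain ⟨j', hj', ej⟩ := this
          have h5 := hA j' (by omega)
          rw [R.cong_sh (n' := n') (k' := k') (j' := i') (w' := w') hj' hin h2 h4 ej b1] at h5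
          exact h5
        · have := hi2 (i' - n') (by omega)
          rwa [show n' + (i' - n') = i' by omega, show k' - (i' - n') = n' + k' - i' by omega]
            at this

theorem Rec.untl {L M : JW → Prop} {C D : Type} {h : ℕ → JW → C} {g : ℕ → JW → D}
    (R : Rec L h) (S : Rec M g) :
    Rec (fun w => ∃ j, M (sh w j) ∧ ∀ j' < j, L (sh w j')) (uh h g) where
  loc n w w' e := by
    have e1 : ∀ j, h (n - j) (sh w j) = h (n - j) (sh w' j) := fun j =>
      R.loc _ _ _ (fun i hi => e (i + j) (by omega))
    have e2 : ∀ j, g (n - j) (sh w j) = g (n - j) (sh w' j) := fun j =>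
      S.loc _ _ _ (fun i hi => e (i + j) (by omega))
    simp only [uh, e1, e2, R.loc n w w' e, S.loc n w w' e]
  cong n k n' k' w w' h1 h2 h3 h4 e1 e2 := by
    have x := uh_cong_aux R S h1 h2 h3 h4 e1 e2
    have y := uh_cong_aux R S h3 h4 h1 h2 e1.symm e2.symm
    have z3 := Set.Subset.antisymm x.1 y.1
    have z4 := Set.Subset.antisymm x.2 y.2
    have a1 : h n w = h n' w' := congrArg (·.1) e1
    have a2 : h k (sh w n) = h k' (sh w' n') := congrArg (·.1) e2
    have b1 : g n w = g n' w' := congrArg (·.2.1) e1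
    have b2 : g k (sh w n) = g k' (sh w' n') := congrArg (·.2.1) e2
    exact Prod.ext (R.cong n k n' k' w w' h1 h2 h3 h4 a1 a2)
      (Prod.ext (S.cong n k n' k' w w' h1 h2 h3 h4 b1 b2) (Prod.ext z3 z4))
  sat c c' w w' h0 h0' hc hc' heq hL := by
    have hb : ∀ i, h (c (i + 1) - c i) (sh w (c i)) = h (c' (i + 1) - c' i) (sh w' (c' i)) :=
      fun i => congrArg (·.1) (heq i)
    have gb : ∀ i, g (c (i + 1) - c i) (sh w (c i)) = g (c' (i + 1) - c' i) (sh w' (c' i)) :=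
      fun i => congrArg (·.2.1) (heq i)
    have h3 := fun i => congrArg (·.2.2.1) (heq i)
    have h4 := fun i => congrArg (·.2.2.2) (heq i)
    simp only [uh] at h3 h4
    obtain ⟨j, hM, hj⟩ := hL
    obtain ⟨k, hk1, hk2⟩ := exists_block c h0 hc j
    have : (g (c (k + 1) - j) (sh w j),
        {d | ∃ j' < j - c k, h (c (k + 1) - c k - j') (sh (sh w (c k)) j') = d}) ∈
        {e : D × Set C | ∃ j < c (k + 1) - c k, g (c (k + 1) - c k - j) (sh (sh w (c k)) j) = e.1 ∧
          ∀ j' < j, h (c (k + 1) - c k - j') (sh (sh w (c k)) j') ∈ e.2} := by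
      refine ⟨j - c k, by omega, ?_, fun j' hj' => ⟨j', hj', rfl⟩⟩
      rw [sh_sh, show c k + (j - c k) = j by omega,
        show c (k + 1) - c k - (j - c k) = c (k + 1) - j by omega]
    rw [h4 k] at this
    obtain ⟨i, hi, ei, hi2⟩ := this
    simp only [sh_sh] at ei hi2
    refine ⟨c' k + i, ?_, fun i' hi' => ?_⟩
    · refine S.suffix (k := k) hc hc' gb rfl hk2 (by omega) ?_ hM
      rw [← ei]; congr 1; omega
    · obtain ⟨k', hk1', hk2'⟩ := exists_block c' h0' hc' i'
      rcases lt_trichotomy k' k with hlt | heqk | hgt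
      · have : h (c' (k' + 1) - i') (sh w' i') ∈
          {e | ∃ j < c' (k' + 1) - c' k', h (c' (k' + 1) - c' k' - j) (sh (sh w' (c' k')) j) = e} := by
          refine ⟨i' - c' k', by omega, ?_⟩
          rw [sh_sh]
          congr 1
          · omega
          · congr 1; omega
        rw [← h3 k'] at this
        obtain ⟨a, ha, ea⟩ := this
        have hle : c (k' + 1) ≤ c k := hc.monotone hlt
        refine R.suffix (k := k') (j := c k' + a) hc hc' hb rfl (by omega) hk2' ?_ (hj _ (by omega))
        rw [← ea, sh_sh]; congr 1; omega
      · subst heqk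
        obtain ⟨a, ha, ea⟩ := hi2 (i' - c' k') (by omega)
        refine R.suffix (k := k') (j := c k' + a) hc hc' hb rfl (by omega) hk2' ?_ (hj _ (by omega))
        rw [show c (k' + 1) - (c k' + a) = c (k' + 1) - c k' - a by omega, ea,
          show c' k' + (i' - c' k') = i' by omega]
        congr 1; omega
      · have : c' (k + 1) ≤ c' k' := hc'.monotone hgt
        omega

/-- Paths of a finite system on the states below `m`. -/
def IsP (m v0 : ℕ) (E : ℕ → ℕ → Prop) (ρ : ℕ → ℕ) : Prop :=
  ρ 0 = v0 ∧ ∀ i, ρ i < m ∧ E (ρ i) (ρ (i + 1))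

def ph (m : ℕ) (E : ℕ → ℕ → Prop) (x : ℕ) (n : ℕ) (w : JW) : Set (Fin m × Fin m) :=
  {e | 0 < n ∧ w 0 x = e.1 ∧ w (n - 1) x = e.2 ∧ (∀ i < n, w i x < m) ∧
    ∀ i, i + 1 < n → E (w i x) (w (i + 1) x)}

theorem ph_cong_aux {m : ℕ} {E : ℕ → ℕ → Prop} {x : ℕ} {n k n' k' : ℕ} {w w' : JW}
    (h1 : 0 < n) (h2 : 0 < k) (_h3 : 0 < n') (_h4 : 0 < k')
    (e1 : ph m E x n w = ph m E x n' w') (e2 : ph m E x k (sh w n) = ph m E x k' (sh w' n')) :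
    ph m E x (n + k) w ⊆ ph m E x (n' + k') w' := by
  rintro ⟨f, l⟩ ⟨_, hf, hl, hm, hE⟩
  have a : (f, (⟨w (n - 1) x, hm _ (by omega)⟩ : Fin m)) ∈ ph m E x n w :=
    ⟨h1, hf, rfl, fun i hi => hm i (by omega), fun i hi => hE i (by omega)⟩
  have b : ((⟨w n x, hm _ (by omega)⟩ : Fin m), l) ∈ ph m E x k (sh w n) := by
    refine ⟨h2, by simp [sh], ?_, fun i hi => hm _ (by omega), fun i hi => ?_⟩
    · simp only [sh]; rw [← hl]; congr 1; omega
    · have := hE (i + n) (by omega)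
      simp only [sh]
      rwa [show i + 1 + n = i + n + 1 by omega]
  rw [e1] at a
  rw [e2] at b
  obtain ⟨_, a2, a3, a4, a5⟩ := a
  obtain ⟨_, b2, b3, b4, b5⟩ := b
  simp only [sh] at a2 a3 a4 a5 b2 b3 b4 b5
  refine ⟨by omega, a2, ?_, fun i hi => ?_, fun i hi => ?_⟩
  · rw [← b3]; congr 1; omega
  · by_cases h : i < n'
    · exact a4 i h
    · have := b4 (i - n') (by omega)
      rwa [show i - n' + n' = i by omega] at this
  · by_cases h : i + 1 < n'
    · exact a5 i h
    · by_cases h' : i + 1 = n'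
      · have := hE (n - 1) (by omega)
        rw [show n - 1 + 1 = n by omega, ← a3] at this
        rw [zero_add] at b2
        rw [← b2] at this
        rw [h', show i = n' - 1 by omega]
        exact this
      · have := b5 (i - n') (by omega)
        rwa [show i - n' + n' = i by omega, show i - n' + 1 + n' = i + 1 by omega] at this

theorem Rec.path (m v0 : ℕ) (E : ℕ → ℕ → Prop) (x : ℕ) :
    Rec (fun w => IsP m v0 E (fun i => w i x)) (ph m E x) where
  loc n w w' e := by
    ext ⟨f, l⟩
    simp only [ph, Set.mem_ofPred_eq]
    refine and_congr_right fun hn => ?_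
    rw [e 0 hn, e (n - 1) (by omega)]
    refine and_congr_right fun _ => and_congr_right fun _ => and_congr ?_ ?_
    · exact forall₂_congr fun i hi => by rw [e i hi]
    · exact forall₂_congr fun i hi => by rw [e i (by omega), e (i + 1) hi]
  cong n k n' k' w w' h1 h2 h3 h4 e1 e2 :=
    Set.Subset.antisymm (ph_cong_aux h1 h2 h3 h4 e1 e2) (ph_cong_aux h3 h4 h1 h2 e1.symm e2.symm)
  sat c c' w w' h0 h0' hc hc' heq hL := by
    obtain ⟨hv, hL⟩ := hL
    have key : ∀ i, 0 < c' (i + 1) - c' i ∧ w' (c' i) x = w (c i) x ∧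
        w' (c' (i + 1) - 1) x = w (c (i + 1) - 1) x ∧
        (∀ j < c' (i + 1) - c' i, w' (j + c' i) x < m) ∧
        ∀ j, j + 1 < c' (i + 1) - c' i → E (w' (j + c' i) x) (w' (j + 1 + c' i) x) := by
      intro i
      have hlt := hc (Nat.lt_succ_self i)
      have hlt' := hc' (Nat.lt_succ_self i)
      simp only [Nat.succ_eq_add_one] at hlt hlt'
      have a : ((⟨w (c i) x, (hL _).1⟩ : Fin m), (⟨w (c (i + 1) - 1) x, (hL _).1⟩ : Fin m)) ∈
          ph m E x (c (i + 1) - c i) (sh w (c i)) := by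
        refine ⟨by omega, by simp [sh], ?_, fun j _ => (hL _).1, fun j _ => ?_⟩
        · simp only [sh]; congr 1; omega
        · have := (hL (j + c i)).2
          simp only [sh]
          rwa [show j + 1 + c i = j + c i + 1 by omega]
      rw [heq i] at a
      obtain ⟨a1, a2, a3, a4, a5⟩ := a
      simp only [sh, zero_add] at a2 a3 a4 a5
      rw [show c' (i + 1) - c' i - 1 + c' i = c' (i + 1) - 1 by omega] at a3
      exact ⟨a1, a2, a3, a4, a5⟩
    refine ⟨?_, fun j => ?_⟩
    · have := (key 0).2.1
      rw [h0, h0'] at this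
      simp only
      rw [this]; exact hv
    · obtain ⟨k, hk1, hk2⟩ := exists_block c' h0' hc' j
      obtain ⟨a1, a2, a3, a4, a5⟩ := key k
      constructor
      · have := a4 (j - c' k) (by omega)
        rwa [show j - c' k + c' k = j by omega] at this
      · by_cases h : j + 1 < c' (k + 1)
        · have := a5 (j - c' k) (by omega)
          rwa [show j - c' k + c' k = j by omega, show j - c' k + 1 + c' k = j + 1 by omega] at this
        · have h' : j + 1 = c' (k + 1) := by omega
          simp only
          rw [h', (key (k + 1)).2.1, show j = c' (k + 1) - 1 by omega, a3]
          have hlt := hc (Nat.lt_succ_self k)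
          simp only [Nat.succ_eq_add_one] at hlt
          have := (hL (c (k + 1) - 1)).2
          rwa [show c (k + 1) - 1 + 1 = c (k + 1) by omega] at this

def upd (w : JW) (x : ℕ) (ρ : ℕ → ℕ) : JW := fun i => Function.update (w i) x (ρ i)

theorem sh_upd (w : JW) (x : ℕ) (ρ : ℕ → ℕ) (j : ℕ) :
    sh (upd w x ρ) j = upd (sh w j) x (fun i => ρ (i + j)) := rfl

def prh {C : Type} (h : ℕ → JW → C) (x : ℕ) (n : ℕ) (w : JW) : Set C :=
  {e | ∃ ρ, h n (upd w x ρ) = e}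

theorem prh_cong_aux {L : JW → Prop} {C : Type} {h : ℕ → JW → C} (R : Rec L h) {x : ℕ}
    {n k n' k' : ℕ} {w w' : JW}
    (h1 : 0 < n) (h2 : 0 < k) (h3 : 0 < n') (h4 : 0 < k')
    (e1 : prh h x n w = prh h x n' w') (e2 : prh h x k (sh w n) = prh h x k' (sh w' n')) :
    prh h x (n + k) w ⊆ prh h x (n' + k') w' := by
  rintro e ⟨ρ, rfl⟩
  have a : h n (upd w x ρ) ∈ prh h x n w := ⟨ρ, rfl⟩
  have b : h k (sh (upd w x ρ) n) ∈ prh h x k (sh w n) := ⟨fun i => ρ (i + n), rfl⟩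
  rw [e1] at a
  rw [e2] at b
  obtain ⟨ρ1, hρ1⟩ := a
  obtain ⟨ρ2, hρ2⟩ := b
  refine ⟨fun i => if i < n' then ρ1 i else ρ2 (i - n'), ?_⟩
  apply R.cong _ _ _ _ _ _ h3 h4 h1 h2
  · rw [← hρ1]
    apply R.loc
    intro i hi
    simp [upd, hi]
  · rw [← hρ2, sh_upd]
    apply R.loc
    intro i hi
    simp [upd]

theorem Rec.proj {L : JW → Prop} {C : Type} {h : ℕ → JW → C} (R : Rec L h) (x : ℕ) :
    Rec (fun w => ∃ ρ, L (upd w x ρ)) (prh h x) where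
  loc n w w' e := by
    ext d
    simp only [prh, Set.mem_ofPred_eq]
    refine exists_congr fun ρ => ?_
    rw [R.loc n (upd w x ρ) (upd w' x ρ)]
    intro i hi
    simp [upd, e i hi]
  cong n k n' k' w w' h1 h2 h3 h4 e1 e2 :=
    Set.Subset.antisymm (prh_cong_aux R h1 h2 h3 h4 e1 e2)
      (prh_cong_aux R h3 h4 h1 h2 e1.symm e2.symm)
  sat c c' w w' h0 h0' hc hc' heq hL := by
    obtain ⟨ρ, hL⟩ := hL
    have key : ∀ i, ∃ ρ', h (c' (i + 1) - c' i) (upd (sh w' (c' i)) x ρ') =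
        h (c (i + 1) - c i) (sh (upd w x ρ) (c i)) := by
      intro i
      have : h (c (i + 1) - c i) (sh (upd w x ρ) (c i)) ∈
        prh h x (c (i + 1) - c i) (sh w (c i)) := ⟨_, rfl⟩
      rw [heq i] at this
      exact this
    choose ρ' hρ' using key
    choose b hb1 hb2 using exists_block c' h0' hc'
    refine ⟨fun j => ρ' (b j) (j - c' (b j)), ?_⟩
    refine R.sat c c' _ _ h0 h0' hc hc' ?_ hL
    intro i
    rw [← hρ' i, sh_upd]
    apply R.loc
    intro j hj
    have : b (j + c' i) = i := by
      have h1 := hb1 (j + c' i)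
      have h2 := hb2 (j + c' i)
      by_contra hne
      rcases lt_or_gt_of_ne hne with h | h
      · have : c' (b (j + c' i) + 1) ≤ c' i := hc'.monotone h
        omega
      · have : c' (i + 1) ≤ c' (b (j + c' i)) := hc'.monotone h
        omega
    simp [upd, this]

/-! ### Ramsey and lassos -/

theorem ramsey {C : Type} [Finite C] (col : ℕ → ℕ → C) :
    ∃ (g : ℕ → ℕ) (e : C), StrictMono g ∧ ∀ i, col (g i) (g (i + 1)) = e := by
  classical
  let U : Ultrafilter ℕ := Filter.hyperfilter ℕ
  have pick : ∀ f : ℕ → C, ∃ e, ∀ᶠ j in (U : Filter ℕ), f j = e := by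
    intro f
    have : ∀ᶠ j in (U : Filter ℕ), ∃ e, f j = e := Filter.Eventually.of_forall fun j => ⟨_, rfl⟩
    exact Ultrafilter.eventually_exists_iff.mp this
  choose d hd using fun i => pick (col i)
  obtain ⟨e, he⟩ := pick d
  have big : ∀ n, ∀ᶠ j in (U : Filter ℕ), n < j := fun n => by
    have := Filter.hyperfilter_le_cofinite (α := ℕ)
    rw [Nat.cofinite_eq_atTop] at this
    exact this (Filter.eventually_gt_atTop n)
  have nxt : ∀ i, d i = e → ∃ j, i < j ∧ d j = e ∧ col i j = e := by
    intro i hi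
    have := ((big i).and (he.and (hd i))).exists
    obtain ⟨j, h1, h2, h3⟩ := this
    exact ⟨j, h1, h2, h3.trans hi⟩
  obtain ⟨i0, hi0⟩ := he.exists
  let G : ℕ → {i // d i = e} := fun n =>
    Nat.rec ⟨i0, hi0⟩ (fun _ i => ⟨(nxt i.1 i.2).choose, (nxt i.1 i.2).choose_spec.2.1⟩) n
  refine ⟨fun n => (G n).1, e, strictMono_nat_of_lt_succ fun n => ?_, fun n => ?_⟩
  · exact (nxt (G n).1 (G n).2).choose_spec.1
  · exact (nxt (G n).1 (G n).2).choose_spec.2.2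

theorem per_mul {α : Type} {f : ℕ → α} {p q : ℕ} (hp : ∀ i, p ≤ i → f (i + q) = f i) (k : ℕ) :
    ∀ i, p ≤ i → f (i + q * k) = f i := by
  induction k with
  | zero => intro i _; simp
  | succ k ih =>
    intro i hi
    rw [Nat.mul_succ, ← add_assoc, hp _ (by omega), ih i hi]

theorem short {L : JW → Prop} {C : Type} [Finite C] {h : ℕ → JW → C} (R : Rec L h) {N : ℕ}
    (hN : Nat.card C ≤ N) {p q : ℕ} {w : JW} (hq : 0 < q) (hp : ∀ i, p ≤ i → w (i + q) = w i)
    (x a : ℕ) (ha : a ≤ p) : ∀ i (ρ : ℕ → ℕ), 1 ≤ i → ∃ i' ρ', 1 ≤ i' ∧ i' ≤ N ∧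
      h (p + q * i' - a) (sh (upd w x ρ') a) = h (p + q * i - a) (sh (upd w x ρ) a) := by
  intro i
  induction i using Nat.strong_induction_on with
  | _ i ih =>
  intro ρ hi
  by_cases hiN : i ≤ N
  · exact ⟨i, ρ, hi, hiN, rfl⟩
  let f : Fin (N + 1) → C := fun b => h (p + q * (b.1 + 1) - a) (sh (upd w x ρ) a)
  have : ∃ b1 b2 : Fin (N + 1), b1 ≠ b2 ∧ f b1 = f b2 := by
    by_contra hcon
    push Not at hcon
    have hinj : Function.Injective f := fun b1 b2 hb => by
      by_contra hne; exact hcon b1 b2 hne hb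
    have := Nat.card_le_card_of_injective f hinj
    simp at this
    omega
  obtain ⟨b1, b2, hlt, hf⟩ : ∃ b1 b2 : Fin (N + 1), b1 < b2 ∧ f b1 = f b2 := by
    obtain ⟨b1, b2, hne, hf⟩ := this
    rcases lt_or_gt_of_ne hne with h | h
    · exact ⟨b1, b2, h, hf⟩
    · exact ⟨b2, b1, h, hf.symm⟩
  simp only [f] at hf
  have hlt' : b1.1 < b2.1 := hlt
  have hb2 := b2.2
  obtain ⟨b1, hb1⟩ := b1
  obtain ⟨b2, hb2⟩ := b2
  simp only at hf hlt' hb2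
  obtain ⟨i', ρ', h1, h2, h3⟩ : ∃ i' ρ', 1 ≤ i' ∧ i' < i ∧
      h (p + q * i' - a) (sh (upd w x ρ') a) = h (p + q * i - a) (sh (upd w x ρ) a) := by
    by_cases hend : b2 + 1 = i
    · exact ⟨b1 + 1, ρ, by omega, by omega, by rw [hf, hend]⟩
    · obtain ⟨d, rfl⟩ : ∃ d, i = b2 + 1 + d := ⟨i - (b2 + 1), by omega⟩
      obtain ⟨s, rfl⟩ : ∃ s, b2 = b1 + s := ⟨b2 - b1, by omega⟩
      have hd : 0 < q * d := Nat.mul_pos hq (by omega)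
      have hb : 0 < q * (b1 + 1) := Nat.mul_pos hq (by omega)
      have hbs : q * (b1 + s + 1) = q * (b1 + 1) + q * s := by ring
      refine ⟨b1 + 1 + d, fun k => if k < p + q * (b1 + 1) then ρ k else ρ (k + q * s),
        by omega, by omega, ?_⟩
      rw [show p + q * (b1 + 1 + d) - a = (p + q * (b1 + 1) - a) + q * d by
          rw [Nat.mul_add q (b1 + 1)]; omega,
        show p + q * (b1 + s + 1 + d) - a = (p + q * (b1 + s + 1) - a) + q * d by
          rw [Nat.mul_add q (b1 + s + 1)]; omega]
      apply R.cong _ _ _ _ _ _ (by omega) hd (by omega) hd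
      · rw [← hf]
        apply R.loc
        intro j hj
        simp only [sh, upd]
        rw [if_pos (by omega)]
      · rw [sh_sh, sh_sh, show a + (p + q * (b1 + 1) - a) = p + q * (b1 + 1) by omega,
          show a + (p + q * (b1 + s + 1) - a) = p + q * (b1 + s + 1) by omega]
        apply R.loc
        intro j hj
        simp only [sh, upd]
        rw [if_neg (by omega), hbs]
        rw [show j + (p + (q * (b1 + 1) + q * s)) = j + (p + q * (b1 + 1)) + q * s by omega]
        rw [per_mul hp s _ (by omega)]
  obtain ⟨i'', ρ'', k1, k2, k3⟩ := ih i' h2 ρ' h1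
  exact ⟨i'', ρ'', k1, k2, k3.trans h3⟩

theorem lasso {L : JW → Prop} {C : Type} [Finite C] {h : ℕ → JW → C} (R : Rec L h) {N : ℕ}
    (hN : Nat.card C ≤ N) {p q : ℕ} {w : JW} (hq : 0 < q) (hp : ∀ i, p ≤ i → w (i + q) = w i)
    (x : ℕ) (ρ : ℕ → ℕ) (hL : L (upd w x ρ)) :
    ∃ ρ', (∀ i, p + q * N ≤ i → ρ' (i + q * N.factorial) = ρ' i) ∧ L (upd w x ρ') := by
  obtain ⟨g0, e, hg0, hge0⟩ := ramsey fun i j => h (q * (j - i)) (sh (upd w x ρ) (p + q * i))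
  obtain ⟨g, hg, hge, hg1⟩ : ∃ g : ℕ → ℕ, StrictMono g ∧
      (∀ i, h (q * (g (i + 1) - g i)) (sh (upd w x ρ) (p + q * g i)) = e) ∧ 1 ≤ g 0 := by
    refine ⟨fun i => g0 (i + 1), fun i j hij => hg0 (by omega), fun i => hge0 (i + 1), ?_⟩
    have h01 : g0 0 < g0 (0 + 1) := hg0 (Nat.lt_succ_self 0)
    exact Nat.succ_le_of_lt (Nat.lt_of_le_of_lt (Nat.zero_le _) h01)
  obtain ⟨i1, ρ1, hi1, hi1N, hs⟩ := short R hN hq hp x 0 (by omega) (g 0) ρ hg1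
  have hg01 := hg (Nat.lt_succ_self 0)
  simp only [Nat.succ_eq_add_one, zero_add] at hg01
  obtain ⟨i3, ρ3, hi3, hi3N, hl⟩ := short R hN hq hp x p le_rfl (g 1 - g 0)
    (fun k => ρ (k + q * g 0)) (by omega)
  have hl' : h (q * i3) (sh (upd w x ρ3) p) = e := by
    rw [show q * i3 = p + q * i3 - p by omega, hl, ← hge 0, Nat.add_sub_cancel_left]
    apply R.loc
    intro j hj
    simp only [sh, upd]
    rw [show j + (p + q * g 0) = j + p + q * g 0 by omega, per_mul hp _ _ (by omega)]
  simp only [Nat.sub_zero, sh_zero] at hs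
  have hqi3 : 0 < q * i3 := Nat.mul_pos hq hi3
  have hqi1 : 0 < q * i1 := Nat.mul_pos hq hi1
  have hqg : 0 < q * g 0 := Nat.mul_pos hq hg1
  refine ⟨fun k => if k < p + q * i1 then ρ1 k else ρ3 (p + (k - (p + q * i1)) % (q * i3)), ?_, ?_⟩
  · intro i hi
    have h1 : q * i1 ≤ q * N := Nat.mul_le_mul_left q hi1N
    obtain ⟨t, ht⟩ := Nat.dvd_factorial hi3 hi3N
    simp only
    rw [if_neg (by omega), if_neg (by omega), ht,
      show i + q * (i3 * t) - (p + q * i1) = (i - (p + q * i1)) + (q * i3) * t by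
        rw [← mul_assoc]; omega, Nat.add_mul_mod_self_left]
  · refine R.sat (fun k => if k = 0 then 0 else p + q * g (k - 1))
      (fun k => if k = 0 then 0 else p + q * i1 + q * i3 * (k - 1)) (upd w x ρ) _
      (by simp) (by simp) ?_ ?_ ?_ hL
    · apply strictMono_nat_of_lt_succ
      intro n
      by_cases hn : n = 0
      · subst hn; simp; omega
      · have : g (n - 1) < g n := hg (by omega)
        simp only [hn, if_false, Nat.add_eq_zero_iff, one_ne_zero, and_false, Nat.add_sub_cancel]
        have := Nat.mul_lt_mul_of_pos_left this hq
        omega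
    · apply strictMono_nat_of_lt_succ
      intro n
      by_cases hn : n = 0
      · subst hn; simp; omega
      · simp only [hn, if_false, Nat.add_eq_zero_iff, one_ne_zero, and_false, Nat.add_sub_cancel]
        have : n - 1 < n := by omega
        have := Nat.mul_lt_mul_of_pos_left this hqi3
        omega
    · intro n
      by_cases hn : n = 0
      · subst hn
        simp only [zero_add, one_ne_zero, if_false, if_true, Nat.sub_self, Nat.sub_zero, sh_zero,
          mul_zero, add_zero]
        rw [← hs]
        apply R.loc
        intro j hj
        simp only [upd]
        rw [if_pos hj]
      · obtain ⟨n, rfl⟩ : ∃ k, n = k + 1 := ⟨n - 1, by omega⟩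
        simp only [Nat.add_eq_zero_iff, one_ne_zero, and_false, if_false, Nat.add_sub_cancel]
        have h1 : g n < g (n + 1) := hg (by omega)
        rw [show p + q * g (n + 1) - (p + q * g n) = q * (g (n + 1) - g n) by
            rw [Nat.mul_sub]; omega, hge n,
          show p + q * i1 + q * i3 * (n + 1) - (p + q * i1 + q * i3 * n) = q * i3 by
            rw [Nat.mul_succ]; omega, ← hl']
        apply R.loc
        intro j hj
        simp only [sh, upd]
        rw [if_neg (by omega),
          show j + (p + q * i1 + q * i3 * n) - (p + q * i1) = j + q * i3 * n by omega,
          Nat.add_mul_mod_self_left, Nat.mod_eq_of_lt hj,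
          show j + (p + q * i1 + q * i3 * n) = j + p + q * (i1 + i3 * n) by ring,
          per_mul hp _ _ (by omega), add_comm p j]


/-! ### Semantics over state words, and class bounds -/

def Recog (L : JW → Prop) (N : ℕ) : Prop :=
  ∃ (C : Type) (_ : Finite C) (h : ℕ → JW → C), Nat.card C ≤ N ∧ Rec L h

def Gb (m N : ℕ) : ℕ :=
  N * N + N * (N * 2) + N * (N * (2 ^ N * 2 ^ (N * 2 ^ N))) + 2 ^ (N * 2 ^ (m * m))

def Bd (m k : ℕ) : ℕ := (Gb m)^[k] 2

def Nb (m k : ℕ) : ℕ := Bd m k * 2 ^ (m * m)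

theorem card_Set (C : Type) [Finite C] : Nat.card (Set C) = 2 ^ Nat.card C := by
  classical
  have := Fintype.ofFinite C
  rw [Nat.card_eq_fintype_card, Nat.card_eq_fintype_card, Fintype.card_set]

theorem card_Prop : Nat.card Prop = 2 := by
  rw [Nat.card_eq_fintype_card, Fintype.card_prop]

theorem Gb_ge1 (m N : ℕ) : N * N ≤ Gb m N :=
  (Nat.le_add_right _ _).trans ((Nat.le_add_right _ _).trans (Nat.le_add_right _ _))

theorem Gb_ge2 (m N : ℕ) : N * (N * 2) ≤ Gb m N :=
  (Nat.le_add_left _ _).trans ((Nat.le_add_right _ _).trans (Nat.le_add_right _ _))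

theorem Gb_ge3 (m N : ℕ) : N * (N * (2 ^ N * 2 ^ (N * 2 ^ N))) ≤ Gb m N :=
  (Nat.le_add_left _ _).trans (Nat.le_add_right _ _)

theorem Gb_ge4 (m N : ℕ) : 2 ^ (N * 2 ^ (m * m)) ≤ Gb m N := Nat.le_add_left _ _

theorem le_Gb (m N : ℕ) : N ≤ Gb m N := (Nat.le_mul_self N).trans (Gb_ge1 m N)

theorem Bd_mono (m : ℕ) : Monotone (Bd m) := by
  apply monotone_nat_of_le_succ
  intro k
  simp only [Bd, Function.iterate_succ_apply']
  exact le_Gb m _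

theorem Gb_Bd_le {m c k : ℕ} (h : c < k) : Gb m (Bd m c) ≤ Bd m k := by
  have : Gb m (Bd m c) = Bd m (c + 1) := by simp only [Bd, Function.iterate_succ_apply']
  rw [this]
  exact Bd_mono m h

theorem Recog.mono {L : JW → Prop} {N M : ℕ} (h : Recog L N) (hNM : N ≤ M) : Recog L M := by
  obtain ⟨C, hC, f, h1, h2⟩ := h
  exact ⟨C, hC, f, h1.trans hNM, h2⟩

theorem Recog.neg {L : JW → Prop} {N : ℕ} (h : Recog L N) : Recog (fun w => ¬ L w) N := by
  obtain ⟨C, hC, f, h1, h2⟩ := h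
  exact ⟨C, hC, f, h1, h2.neg⟩

theorem Recog.inter {L M : JW → Prop} {N K : ℕ} (h : Recog L N) (h' : Recog M K) :
    Recog (fun w => L w ∧ M w) (N * K) := by
  obtain ⟨C, hC, f, h1, h2⟩ := h
  obtain ⟨C', hC', f', h1', h2'⟩ := h'
  refine ⟨C × C', inferInstance, _, ?_, h2.inter h2'⟩
  rw [Nat.card_prod]; gcongr

theorem Recog.union {L M : JW → Prop} {N K : ℕ} (h : Recog L N) (h' : Recog M K) :
    Recog (fun w => L w ∨ M w) (N * K) := by
  obtain ⟨C, hC, f, h1, h2⟩ := h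
  obtain ⟨C', hC', f', h1', h2'⟩ := h'
  refine ⟨C × C', inferInstance, _, ?_, h2.union h2'⟩
  rw [Nat.card_prod]; gcongr

theorem Recog.next {L : JW → Prop} {N : ℕ} (h : Recog L N) :
    Recog (fun w => L (sh w 1)) (N * (N * 2)) := by
  obtain ⟨C, hC, f, h1, h2⟩ := h
  refine ⟨C × C × Prop, inferInstance, _, ?_, h2.next⟩
  rw [Nat.card_prod, Nat.card_prod, card_Prop]; gcongr

theorem Recog.untl {L M : JW → Prop} {N K : ℕ} (h : Recog L N) (h' : Recog M K) :
    Recog (fun w => ∃ j, M (sh w j) ∧ ∀ j' < j, L (sh w j'))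
      (N * (K * (2 ^ N * 2 ^ (K * 2 ^ N)))) := by
  obtain ⟨C, hC, f, h1, h2⟩ := h
  obtain ⟨C', hC', f', h1', h2'⟩ := h'
  refine ⟨C × C' × Set C × Set (C' × Set C), inferInstance, _, ?_, h2.untl h2'⟩
  rw [Nat.card_prod, Nat.card_prod, Nat.card_prod, card_Set, card_Set, Nat.card_prod, card_Set]
  gcongr <;> norm_num

theorem Recog.proj {L : JW → Prop} {N : ℕ} (h : Recog L N) (x : ℕ) :
    Recog (fun w => ∃ ρ, L (upd w x ρ)) (2 ^ N) := by
  obtain ⟨C, hC, f, h1, h2⟩ := h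
  refine ⟨Set C, inferInstance, _, ?_, h2.proj x⟩
  rw [card_Set]
  gcongr; norm_num

theorem Recog.path (m v0 : ℕ) (E : ℕ → ℕ → Prop) (x : ℕ) :
    Recog (fun w => IsP m v0 E (fun i => w i x)) (2 ^ (m * m)) := by
  refine ⟨Set (Fin m × Fin m), inferInstance, _, ?_, Rec.path m v0 E x⟩
  rw [card_Set, Nat.card_prod, Nat.card_eq_fintype_card, Fintype.card_fin]

theorem Recog.of_iff {L M : JW → Prop} {N : ℕ} (h : Recog L N) (e : ∀ w, L w ↔ M w) :
    Recog M N := by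
  have : L = M := funext fun w => propext (e w)
  rwa [← this]

/-- The trace assignment of a state word. -/
def tr (lab : ℕ → Set ℕ) (w : JW) : ℕ → Trace ℕ := fun x i => lab (w i x)

theorem shiftAsg_tr (lab : ℕ → Set ℕ) (w : JW) (j : ℕ) : shiftAsg (tr lab w) j = tr lab (sh w j) :=
  rfl

/-- Semantics with quantification over paths instead of traces. -/
def hs (lab : ℕ → Set ℕ) (P : (ℕ → ℕ) → Prop) : HFormula ℕ → JW → Prop
  | .ex x φ, w => ∃ ρ, P ρ ∧ hs lab P φ (upd w x ρ)
  | .all x φ, w => ∀ ρ, P ρ → hs lab P φ (upd w x ρ)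
  | .qf ψ, w => ψ.sat (tr lab w)

abbrev cq (ψ : QF ℕ) : ℕ := ψ.codeWith id
abbrev ch (φ : HFormula ℕ) : ℕ := φ.codeWith id

theorem lt_pair {t c : ℕ} (ht : 0 < t) : c < Nat.pair t c :=
  lt_of_le_of_lt (Nat.right_le_pair 0 c) (Nat.pair_lt_pair_left c ht)

theorem two_le_ch (φ : HFormula ℕ) : 2 ≤ ch φ := by
  induction φ with
  | ex x φ ih => exact ih.trans ((Nat.right_le_pair x _).trans (Nat.right_le_pair 0 _))
  | all x φ ih => exact ih.trans ((Nat.right_le_pair x _).trans (Nat.right_le_pair 1 _))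
  | qf ψ => exact Nat.left_le_pair 2 _

theorem ch_lt (φ : HFormula ℕ) (t x : ℕ) : ch φ < Nat.pair t (Nat.pair x (ch φ)) := by
  have h2 := two_le_ch φ
  have h1 := Nat.right_le_pair x (ch φ)
  rcases Nat.eq_zero_or_pos t with h | h
  · subst h
    generalize Nat.pair x (ch φ) = k at h1 ⊢
    have : Nat.pair 0 k = k * k := by
      unfold Nat.pair; rw [if_pos (by omega)]; rfl
    rw [this]
    nlinarith
  · exact lt_of_le_of_lt h1 (lt_pair h)

theorem Recog_qf (lab : ℕ → Set ℕ) (m : ℕ) (ψ : QF ℕ) :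
    Recog (fun w => ψ.sat (tr lab w)) (Bd m (cq ψ)) := by
  induction ψ with
  | atom a x =>
    have : Recog (fun w => (QF.atom a x).sat (tr lab w)) 2 :=
      ⟨Prop, inferInstance, _, card_Prop.le, Rec.atom (fun v => a ∈ lab (v x))⟩
    exact this.mono (Bd_mono m (Nat.zero_le _))
  | neg ψ ih => exact ih.neg.mono (Bd_mono m (lt_pair (by norm_num)).le)
  | disj ψ₁ ψ₂ ih1 ih2 =>
    have l1 : cq ψ₁ ≤ Nat.pair (cq ψ₁) (cq ψ₂) := Nat.left_le_pair _ _
    have l2 : cq ψ₂ ≤ Nat.pair (cq ψ₁) (cq ψ₂) := Nat.right_le_pair _ _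
    have := (ih1.mono (Bd_mono m l1)).union (ih2.mono (Bd_mono m l2))
    refine this.mono (le_trans ?_ (Gb_Bd_le (lt_pair (by norm_num))))
    exact Gb_ge1 _ _
  | next ψ ih =>
    refine ih.next.mono (le_trans ?_ (Gb_Bd_le (lt_pair (by norm_num))))
    exact Gb_ge2 _ _
  | untl ψ₁ ψ₂ ih1 ih2 =>
    have l1 : cq ψ₁ ≤ Nat.pair (cq ψ₁) (cq ψ₂) := Nat.left_le_pair _ _
    have l2 : cq ψ₂ ≤ Nat.pair (cq ψ₁) (cq ψ₂) := Nat.right_le_pair _ _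
    have := (ih1.mono (Bd_mono m l1)).untl (ih2.mono (Bd_mono m l2))
    refine this.mono (le_trans ?_ (Gb_Bd_le (lt_pair (by norm_num))))
    exact Gb_ge3 _ _

theorem upd_self (w : JW) (x : ℕ) (ρ : ℕ → ℕ) : (fun i => upd w x ρ i x) = ρ := by
  funext i; simp [upd]

theorem Recog_hs (lab : ℕ → Set ℕ) (m v0 : ℕ) (E : ℕ → ℕ → Prop) (φ : HFormula ℕ) :
    Recog (fun w => hs lab (IsP m v0 E) φ w) (Bd m (ch φ)) := by
  induction φ with
  | ex x φ ih =>
    have := (ih.inter (Recog.path m v0 E x)).proj x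
    refine Recog.of_iff (this.mono (le_trans ?_ (Gb_Bd_le (ch_lt φ 0 x)))) ?_
    · exact Gb_ge4 _ _
    · intro w
      simp only [hs, upd_self]
      exact exists_congr fun ρ => and_comm
  | all x φ ih =>
    have := ((ih.neg.inter (Recog.path m v0 E x)).proj x).neg
    refine Recog.of_iff (this.mono (le_trans ?_ (Gb_Bd_le (ch_lt φ 1 x)))) ?_
    · exact Gb_ge4 _ _
    · intro w
      simp only [hs, upd_self]
      push Not
      exact forall_congr' fun ρ => not_imp_not.symm.trans (by tauto)
  | qf ψ =>
    exact (Recog_qf lab m ψ).mono (Bd_mono m (lt_pair (by norm_num)).le)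

theorem Recog.lasso {L : JW → Prop} {m v0 k : ℕ} {E : ℕ → ℕ → Prop} (hR : Recog L (Bd m k))
    {p q : ℕ} {w : JW} (hq : 0 < q) (hp : ∀ i, p ≤ i → w (i + q) = w i)
    (x : ℕ) (ρ : ℕ → ℕ) (hρ : IsP m v0 E ρ) (hL : L (upd w x ρ)) :
    ∃ ρ', (∀ i, p + q * Nb m k ≤ i → ρ' (i + q * (Nb m k).factorial) = ρ' i) ∧
      IsP m v0 E ρ' ∧ L (upd w x ρ') := by
  obtain ⟨C, hC, f, h1, h2⟩ := hR.inter (Recog.path m v0 E x)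
  obtain ⟨ρ', a, b, c⟩ := HL.lasso h2 (N := Nb m k) h1 hq hp x ρ ⟨hL, by rwa [upd_self]⟩
  rw [upd_self] at c
  exact ⟨ρ', a, c, b⟩


/-! ### Coded finite transition systems -/

/-- Coded systems: number of states, initial state, labels, edges. -/
abbrev Th : Type := ℕ × ℕ × List (ℕ × ℕ) × List (ℕ × ℕ)

def Th.lab (θ : Th) (v : ℕ) : Set ℕ := {a | (v, a) ∈ θ.2.2.1}
def Th.E (θ : Th) (v w : ℕ) : Prop := (v, w) ∈ θ.2.2.2
def Th.P (θ : Th) : (ℕ → ℕ) → Prop := IsP θ.1 θ.2.1 θ.E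
def Th.ok (θ : Th) : Prop :=
  θ.2.1 < θ.1 ∧ (∀ v < θ.1, ∃ w < θ.1, (v, w) ∈ θ.2.2.2) ∧ ∀ e ∈ θ.2.2.1, e.1 < θ.1

theorem qf_agree (B : ℕ) (ψ : QF ℕ) (hB : cq ψ < B) (As As' : ℕ → Trace ℕ)
    (h : ∀ x i a, a < B → (a ∈ As x i ↔ a ∈ As' x i)) : ψ.sat As ↔ ψ.sat As' := by
  induction ψ generalizing As As' with
  | atom a x =>
    refine h x 0 a (lt_of_le_of_lt ?_ hB)
    exact (Nat.left_le_pair a x).trans (Nat.right_le_pair 0 _)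
  | neg ψ ih =>
    have l : cq ψ < B := lt_of_le_of_lt (Nat.right_le_pair 1 _) hB
    exact not_congr (ih l _ _ h)
  | disj ψ₁ ψ₂ ih1 ih2 =>
    have l : Nat.pair (cq ψ₁) (cq ψ₂) < B := lt_of_le_of_lt (Nat.right_le_pair 2 _) hB
    have l1 : cq ψ₁ < B := lt_of_le_of_lt (Nat.left_le_pair _ _) l
    have l2 : cq ψ₂ < B := lt_of_le_of_lt (Nat.right_le_pair _ _) l
    exact or_congr (ih1 l1 _ _ h) (ih2 l2 _ _ h)
  | next ψ ih =>
    have l : cq ψ < B := lt_of_le_of_lt (Nat.right_le_pair 3 _) hB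
    exact ih l _ _ (fun x i a ha => h x (i + 1) a ha)
  | untl ψ₁ ψ₂ ih1 ih2 =>
    have l : Nat.pair (cq ψ₁) (cq ψ₂) < B := lt_of_le_of_lt (Nat.right_le_pair 4 _) hB
    have l1 : cq ψ₁ < B := lt_of_le_of_lt (Nat.left_le_pair _ _) l
    have l2 : cq ψ₂ < B := lt_of_le_of_lt (Nat.right_le_pair _ _) l
    have e1 : ∀ j, ψ₁.sat (shiftAsg As j) ↔ ψ₁.sat (shiftAsg As' j) := fun j =>
      ih1 l1 _ _ (fun x i a ha => h x (i + j) a ha)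
    have e2 : ∀ j, ψ₂.sat (shiftAsg As j) ↔ ψ₂.sat (shiftAsg As' j) := fun j =>
      ih2 l2 _ _ (fun x i a ha => h x (i + j) a ha)
    simp only [QF.sat, e1, e2]

theorem hf_agree (B : ℕ) (lab : ℕ → Set ℕ) (P : (ℕ → ℕ) → Prop) (T : Set (Trace ℕ))
    (h1 : ∀ t ∈ T, ∃ ρ, P ρ ∧ ∀ i a, a < B → (a ∈ t i ↔ a ∈ lab (ρ i)))
    (h2 : ∀ ρ, P ρ → ∃ t ∈ T, ∀ i a, a < B → (a ∈ t i ↔ a ∈ lab (ρ i)))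
    (φ : HFormula ℕ) (hB : ch φ < B) (As : ℕ → Trace ℕ) (w : JW)
    (h : ∀ x i a, a < B → (a ∈ As x i ↔ a ∈ lab (w i x))) : φ.sat T As ↔ hs lab P φ w := by
  have key : ∀ (As : ℕ → Trace ℕ) (w : JW) x t ρ,
      (∀ x i a, a < B → (a ∈ As x i ↔ a ∈ lab (w i x))) →
      (∀ i a, a < B → (a ∈ t i ↔ a ∈ lab (ρ i))) →
      ∀ y i a, a < B → (a ∈ Function.update As x t y i ↔ a ∈ lab (upd w x ρ i y)) := by
    intro As w x t ρ h h' y i a ha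
    by_cases hy : y = x
    · subst hy; simpa [upd] using h' i a ha
    · simpa [upd, Function.update_of_ne hy] using h y i a ha
  induction φ generalizing As w with
  | ex x φ ih =>
    have l : ch φ < B := lt_trans (ch_lt φ 0 x) hB
    constructor
    · rintro ⟨t, ht, hs⟩
      obtain ⟨ρ, hρ, e⟩ := h1 t ht
      exact ⟨ρ, hρ, (ih l _ _ (key _ _ _ _ _ h e)).1 hs⟩
    · rintro ⟨ρ, hρ, hs⟩
      obtain ⟨t, ht, e⟩ := h2 ρ hρ
      exact ⟨t, ht, (ih l _ _ (key _ _ _ _ _ h e)).2 hs⟩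
  | all x φ ih =>
    have l : ch φ < B := lt_trans (ch_lt φ 1 x) hB
    constructor
    · intro hs ρ hρ
      obtain ⟨t, ht, e⟩ := h2 ρ hρ
      exact (ih l _ _ (key _ _ _ _ _ h e)).1 (hs t ht)
    · intro hs t ht
      obtain ⟨ρ, hρ, e⟩ := h1 t ht
      exact (ih l _ _ (key _ _ _ _ _ h e)).2 (hs ρ hρ)
  | qf ψ =>
    refine qf_agree B ψ (lt_of_le_of_lt (Nat.right_le_pair 2 _) hB) _ _ ?_
    intro x i a ha
    exact h x i a ha

theorem TS_iff_Th (φ : HFormula ℕ) :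
    (∃ S : TS ℕ, Finite S.V ∧ HModels S.traces φ) ↔
      ∃ θ : Th, θ.ok ∧ hs θ.lab θ.P φ (fun _ _ => θ.1) := by
  classical
  constructor
  · rintro ⟨S, hfin, hS⟩
    have := Fintype.ofFinite S.V
    set m := Fintype.card S.V with hm
    let e : S.V ≃ Fin m := Fintype.equivFin S.V
    set B := ch φ + 1 with hB
    have hmpos : 0 < m := Fintype.card_pos_iff.2 ⟨S.vI⟩
    let lb : List (ℕ × ℕ) := ((List.range m).product (List.range B)).filter
      (fun z => decide (∃ v : S.V, (e v : ℕ) = z.1 ∧ z.2 ∈ S.lab v))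
    let ed : List (ℕ × ℕ) := ((List.range m).product (List.range m)).filter
      (fun z => decide (∃ v w : S.V, (e v : ℕ) = z.1 ∧ (e w : ℕ) = z.2 ∧ S.E v w))
    have hlb : ∀ v a, a < B → (((e v : ℕ), a) ∈ lb ↔ a ∈ S.lab v) := by
      intro v a ha
      simp only [lb, List.mem_filter, List.pair_mem_product, List.mem_range, decide_eq_true_eq]
      constructor
      · rintro ⟨-, v', h1, h2⟩
        have : v' = v := e.injective (Fin.ext h1)
        rwa [← this]
      · intro h; exact ⟨⟨(e v).2, ha⟩, v, rfl, h⟩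
    have hed : ∀ v w, (((e v : ℕ), (e w : ℕ)) ∈ ed ↔ S.E v w) := by
      intro v w
      simp only [ed, List.mem_filter, List.pair_mem_product, List.mem_range, decide_eq_true_eq]
      constructor
      · rintro ⟨-, v', w', h1, h2, h3⟩
        have e1 : v' = v := e.injective (Fin.ext h1)
        have e2 : w' = w := e.injective (Fin.ext h2)
        rwa [← e1, ← e2]
      · intro h; exact ⟨⟨(e v).2, (e w).2⟩, v, w, rfl, rfl, h⟩
    have hlbm : ∀ z ∈ lb, z.1 < m := by
      rintro ⟨z1, z2⟩ hz
      simp only [lb, List.mem_filter, List.pair_mem_product, List.mem_range] at hz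
      exact hz.1.1
    refine ⟨(m, (e S.vI : ℕ), lb, ed), ⟨(e S.vI).2, ?_, hlbm⟩, ?_⟩
    · intro v hv
      obtain ⟨w, hw⟩ := S.succ (e.symm ⟨v, hv⟩)
      refine ⟨e w, (e w).2, ?_⟩
      have := (hed _ _).2 hw
      simpa using this
    · refine (hf_agree B _ _ S.traces ?_ ?_ φ (Nat.lt_succ_self _) _ _ ?_).1 hS
      · rintro t ⟨ρ, hρ, h0, rfl⟩
        refine ⟨fun i => e (ρ i), ⟨by simp [h0], fun i => ⟨(e _).2, (hed _ _).2 (hρ i)⟩⟩, ?_⟩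
        intro i a ha
        exact (hlb _ _ ha).symm
      · rintro ρ ⟨h0, hρ⟩
        refine ⟨_, ⟨fun i => e.symm ⟨ρ i, (hρ i).1⟩, ?_, ?_, rfl⟩, ?_⟩
        · intro i
          refine (hed _ _).1 ?_
          simpa [Th.E] using (hρ i).2
        · apply e.injective
          apply Fin.ext
          simpa using h0
        · intro i a ha
          refine (hlb _ _ ha).symm.trans ?_
          simp [Th.lab]
      · intro x i a ha
        simp only [Set.mem_empty_iff_false, false_iff]
        intro h
        exact lt_irrefl _ (hlbm _ h)
  · rintro ⟨⟨m, v0, lb, ed⟩, ⟨h0, h1, h2⟩, h⟩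
    dsimp only at h0 h1 h2
    let S : TS ℕ :=
      { V := Fin m
        E := fun v w => ((v : ℕ), (w : ℕ)) ∈ ed
        vI := ⟨v0, h0⟩
        lab := fun v => {a | ((v : ℕ), a) ∈ lb}
        succ := fun v => by
          obtain ⟨w, hw, hw'⟩ := h1 v v.2
          exact ⟨⟨w, hw⟩, hw'⟩ }
    refine ⟨S, inferInstanceAs (Finite (Fin m)), ?_⟩
    refine (hf_agree (ch φ + 1) _ _ S.traces ?_ ?_ φ (Nat.lt_succ_self _) _ _ ?_).2 h
    · rintro t ⟨ρ, hρ, hi, rfl⟩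
      refine ⟨fun i => (ρ i).1, ⟨by simp [hi, S], fun i => ⟨(ρ i).2, hρ i⟩⟩, ?_⟩
      intro i a ha
      exact Iff.rfl
    · rintro ρ ⟨hi, hρ⟩
      refine ⟨_, ⟨fun i => ⟨ρ i, (hρ i).1⟩, ?_, Fin.ext hi, rfl⟩, ?_⟩
      · intro i; exact (hρ i).2
      · intro i a ha; exact Iff.rfl
    · intro x i a ha
      simp only [Set.mem_empty_iff_false, false_iff]
      intro h
      exact lt_irrefl _ (h2 _ h)


/-! ### Primitive recursive helpers and derivations -/

section PR
variable {α β : Type} [Primcodable α] [Primcodable β]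

theorem ppAll {g : α → List β} {R : α → β → Prop} (hg : Primrec g)
    (hR : PrimrecPred fun z : α × β => R z.1 z.2) : PrimrecPred fun a => ∀ b ∈ g a, R a b := by
  have h : PrimrecRel fun (b : β) (a : α) => R a b := hR.comp (Primrec.snd.pair Primrec.fst)
  exact h.forall_mem_list.comp hg Primrec.id

theorem ppEx {g : α → List β} {R : α → β → Prop} (hg : Primrec g)
    (hR : PrimrecPred fun z : α × β => R z.1 z.2) : PrimrecPred fun a => ∃ b ∈ g a, R a b := by
  have h : PrimrecRel fun (b : β) (a : α) => R a b := hR.comp (Primrec.snd.pair Primrec.fst)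
  exact h.exists_mem_list.comp hg Primrec.id

theorem ppAllLt {g : α → ℕ} {R : α → ℕ → Prop} (hg : Primrec g)
    (hR : PrimrecPred fun z : α × ℕ => R z.1 z.2) : PrimrecPred fun a => ∀ b < g a, R a b :=
  (ppAll (Primrec.list_range.comp hg) hR).of_eq fun a => by simp

theorem ppExLt {g : α → ℕ} {R : α → ℕ → Prop} (hg : Primrec g)
    (hR : PrimrecPred fun z : α × ℕ => R z.1 z.2) : PrimrecPred fun a => ∃ b < g a, R a b :=
  (ppEx (Primrec.list_range.comp hg) hR).of_eq fun a => by simp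

theorem ppMem {f : α → β} {g : α → List β} (hf : Primrec f) (hg : Primrec g) :
    PrimrecPred fun a => f a ∈ g a := by
  have h : PrimrecPred fun a => ∃ b ∈ g a, b = f a :=
    ppEx hg (Primrec.eq.comp Primrec.snd (hf.comp Primrec.fst))
  refine h.of_eq fun a => ?_
  simp

theorem ppImp {p q : α → Prop} (hp : PrimrecPred p) (hq : PrimrecPred q) :
    PrimrecPred fun a => p a → q a :=
  (hp.not.or hq).of_eq fun a => by tauto

theorem ppEqC {f : α → ℕ} (hf : Primrec f) (k : ℕ) : PrimrecPred fun a => f a = k :=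
  Primrec.eq.comp hf (Primrec.const k)

end PR

section Deriv
variable {Θ J : Type}

/-- `D` is a derivation: every entry is justified by later entries. -/
def Valid (Just : Θ → J → List J → Prop) (θ : Θ) : List J → Prop
  | [] => True
  | c :: D => Just θ c D ∧ Valid Just θ D

theorem valid_iff (Just : Θ → J → List J → Prop) (θ : Θ) (d : J) (D : List J) :
    Valid Just θ D ↔ ∀ k < D.length, Just θ (D.getD k d) (D.drop (k + 1)) := by
  induction D with
  | nil => simp [Valid]
  | cons c D ih =>
    rw [Valid, ih]
    constructor
    · rintro ⟨h1, h2⟩ k hk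
      cases k with
      | zero => simpa using h1
      | succ k => simpa using h2 k (by simpa using hk)
    · intro h
      refine ⟨by simpa using h 0 (by simp), fun k hk => ?_⟩
      simpa using h (k + 1) (by simpa using hk)

theorem valid_primrec [Primcodable Θ] [Primcodable J] (d : J) {Just : Θ → J → List J → Prop}
    (h : PrimrecPred fun z : Θ × J × List J => Just z.1 z.2.1 z.2.2) :
    PrimrecPred fun z : Θ × List J => Valid Just z.1 z.2 := by
  have : PrimrecPred fun z : Θ × List J =>
      ∀ k < z.2.length, Just z.1 (z.2.getD k d) (z.2.drop (k + 1)) := by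
    refine ppAllLt (Primrec.list_length.comp Primrec.snd) ?_
    refine h.comp (f := fun y : (Θ × List J) × ℕ =>
      (y.1.1, (y.1.2.getD y.2 d), (y.1.2.drop (y.2 + 1)))) ?_
    have h2 : Primrec fun y : (Θ × List J) × ℕ => y.1.2 := Primrec.snd.comp Primrec.fst
    refine (Primrec.fst.comp Primrec.fst).pair (Primrec.pair ?_ ?_)
    · exact (Primrec.list_getD d).comp h2 Primrec.snd
    · exact Primrec.list_drop.comp (Primrec.succ.comp Primrec.snd) h2
  exact this.of_eq fun z => (valid_iff Just z.1 d z.2).symm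

def Der (Just : Θ → J → List J → Prop) (θ : Θ) (c : J) : Prop :=
  ∃ D, Valid Just θ D ∧ c ∈ D

def Mono (Just : Θ → J → List J → Prop) : Prop :=
  ∀ θ c L L', (∀ e ∈ L, e ∈ L') → Just θ c L → Just θ c L'

theorem valid_append {Just : Θ → J → List J → Prop} (hm : Mono Just) {θ : Θ} {D D' : List J}
    (h : Valid Just θ D) (h' : Valid Just θ D') : Valid Just θ (D ++ D') := by
  induction D with
  | nil => exact h'
  | cons c D ih =>
    refine ⟨hm _ _ _ _ ?_ h.1, ih h.2⟩
    intro e he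
    exact List.mem_append_left _ he

theorem Der.many {Just : Θ → J → List J → Prop} (hm : Mono Just) {θ : Θ} (L : List J)
    (h : ∀ e ∈ L, Der Just θ e) : ∃ D, Valid Just θ D ∧ ∀ e ∈ L, e ∈ D := by
  induction L with
  | nil => exact ⟨[], trivial, by simp⟩
  | cons c L ih =>
    obtain ⟨D, h1, h2⟩ := ih (fun e he => h e (List.mem_cons_of_mem _ he))
    obtain ⟨D', h1', h2'⟩ := h c List.mem_cons_self
    refine ⟨D' ++ D, valid_append hm h1' h1, ?_⟩
    intro e he
    rcases List.mem_cons.1 he with rfl | he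
    · exact List.mem_append_left _ h2'
    · exact List.mem_append_right _ (h2 e he)

theorem Der.step {Just : Θ → J → List J → Prop} (hm : Mono Just) {θ : Θ} {c : J} (L : List J)
    (h : ∀ e ∈ L, Der Just θ e) (hj : Just θ c L) : Der Just θ c := by
  obtain ⟨D, h1, h2⟩ := Der.many hm L h
  exact ⟨c :: D, ⟨hm _ _ _ _ h2 hj, h1⟩, List.mem_cons_self⟩

theorem Der.sound {Just : Θ → J → List J → Prop} {θ : Θ} (good : J → Prop)
    (h : ∀ c L, (∀ e ∈ L, good e) → Just θ c L → good c) {c : J} (hc : Der Just θ c) : good c := by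
  obtain ⟨D, hv, hc⟩ := hc
  have : ∀ e ∈ D, good e := by
    clear hc
    induction D with
    | nil => simp
    | cons d D ih =>
      have := ih hv.2
      intro e he
      rcases List.mem_cons.1 he with rfl | he
      · exact h _ _ this hv.1
      · exact this e he
  exact this c hc

end Deriv

/-- Semi-decidability from a primitive recursive witness predicate. -/
theorem isRE_of_primrec {β : Type} [Primcodable β] [Inhabited β] {R : ℕ → β → Prop}
    (h : PrimrecPred fun z : ℕ × β => R z.1 z.2) {N : Set ℕ} (hN : ∀ n, n ∈ N ↔ ∃ y, R n y) :
    IsRE N := by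
  classical
  let g : ℕ → ℕ → Bool := fun n k => decide (R n ((Encodable.decode (α := β) k).getD default))
  have hg : Primrec₂ g := by
    have : PrimrecPred fun z : ℕ × ℕ => R z.1 ((Encodable.decode (α := β) z.2).getD default) :=
      h.comp (Primrec.fst.pair
        (Primrec.option_getD.comp (Primrec.decode.comp Primrec.snd) (Primrec.const default)))
    exact this.decide
  refine ⟨fun n => Nat.rfind fun k => Part.some (g n k), ?_, ?_⟩
  · have h1 : Partrec₂ fun n k : ℕ => Part.some (g n k) := hg.to_comp.partrec₂
    exact Partrec.nat_iff.1 (Partrec.rfind h1)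
  · intro n
    rw [hN]
    refine Iff.trans ?_ Nat.rfind_dom'.symm
    constructor
    · rintro ⟨y, hy⟩
      refine ⟨Encodable.encode y, ?_, fun {m} _ => trivial⟩
      simpa [g] using hy
    · rintro ⟨k, hk, -⟩
      exact ⟨_, by simpa [g] using hk⟩

/-! ### Well-formedness of codes -/

theorem pair_inj {a b c d : ℕ} (h : Nat.pair a b = Nat.pair c d) : a = c ∧ b = d :=
  Nat.pair_eq_pair.1 h

abbrev WJ : Type := ℕ × ℕ × List ℕ

def WJust (_ : Unit) (c : WJ) (L : List WJ) : Prop :=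
  (c.1 = 0 ∧ ((c.2.1.unpair.1 = 0 ∧ c.2.1.unpair.2.unpair.2 ∈ c.2.2) ∨
    ((c.2.1.unpair.1 = 1 ∨ c.2.1.unpair.1 = 3) ∧ (0, c.2.1.unpair.2, c.2.2) ∈ L) ∨
    ((c.2.1.unpair.1 = 2 ∨ c.2.1.unpair.1 = 4) ∧ (0, c.2.1.unpair.2.unpair.1, c.2.2) ∈ L ∧
      (0, c.2.1.unpair.2.unpair.2, c.2.2) ∈ L))) ∨
  (c.1 = 1 ∧ ((c.2.1.unpair.1 = 2 ∧ (0, c.2.1.unpair.2, c.2.2) ∈ L) ∨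
    ((c.2.1.unpair.1 = 0 ∨ c.2.1.unpair.1 = 1) ∧
      (1, c.2.1.unpair.2.unpair.2, c.2.1.unpair.2.unpair.1 :: c.2.2) ∈ L)))

theorem WJust_mono : Mono WJust := by
  intro θ c L L' h hj
  unfold WJust at hj ⊢
  have := @h
  grind

theorem WJust_primrec : PrimrecPred fun z : Unit × WJ × List WJ => WJust z.1 z.2.1 z.2.2 := by
  have hc : Primrec fun z : Unit × WJ × List WJ => z.2.1 := Primrec.fst.comp Primrec.snd
  have hL : Primrec fun z : Unit × WJ × List WJ => z.2.2 := Primrec.snd.comp Primrec.snd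
  have ht : Primrec fun z : Unit × WJ × List WJ => z.2.1.1 := Primrec.fst.comp hc
  have hn := Primrec.unpair.comp (Primrec.fst.comp (Primrec.snd.comp hc))
  have hx : Primrec fun z : Unit × WJ × List WJ => z.2.1.2.2 :=
    Primrec.snd.comp (Primrec.snd.comp hc)
  have ha := Primrec.fst.comp hn
  have hb := Primrec.snd.comp hn
  have hb1 := Primrec.fst.comp (Primrec.unpair.comp hb)
  have hb2 := Primrec.snd.comp (Primrec.unpair.comp hb)
  have k := fun (i : ℕ) => Primrec.const (α := Unit × WJ × List WJ) i
  refine ((ppEqC ht 0).and (((ppEqC ha 0).and (ppMem hb2 hx)).or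
    ((((ppEqC ha 1).or (ppEqC ha 3)).and (ppMem ((k 0).pair (hb.pair hx)) hL)).or
    (((ppEqC ha 2).or (ppEqC ha 4)).and ((ppMem ((k 0).pair (hb1.pair hx)) hL).and
      (ppMem ((k 0).pair (hb2.pair hx)) hL)))))).or ((ppEqC ht 1).and
    (((ppEqC ha 2).and (ppMem ((k 0).pair (hb.pair hx)) hL)).or
    (((ppEqC ha 0).or (ppEqC ha 1)).and
    (ppMem ((k 1).pair (hb2.pair (Primrec.list_cons.comp hb1 hx))) hL))))

theorem WDer_sound {c : WJ} (h : Der WJust () c) :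
    (c.1 = 0 → ∃ ψ : QF ℕ, cq ψ = c.2.1 ∧ ∀ x ∈ ψ.freeVars, x ∈ c.2.2) ∧
    (c.1 = 1 → ∃ φ : HFormula ℕ, ch φ = c.2.1 ∧ ∀ x ∈ φ.freeVars, x ∈ c.2.2) := by
  refine Der.sound (fun c : WJ =>
    (c.1 = 0 → ∃ ψ : QF ℕ, cq ψ = c.2.1 ∧ ∀ x ∈ ψ.freeVars, x ∈ c.2.2) ∧
    (c.1 = 1 → ∃ φ : HFormula ℕ, ch φ = c.2.1 ∧ ∀ x ∈ φ.freeVars, x ∈ c.2.2)) ?_ h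
  rintro ⟨t, n, ctx⟩ L hL hj
  obtain ⟨a, b, rfl⟩ : ∃ a b, n = Nat.pair a b := ⟨_, _, (Nat.pair_unpair n).symm⟩
  obtain ⟨b1, b2, rfl⟩ : ∃ b1 b2, b = Nat.pair b1 b2 := ⟨_, _, (Nat.pair_unpair b).symm⟩
  simp only [WJust, Nat.unpair_pair] at hj
  rcases hj with ⟨rfl, hj⟩ | ⟨rfl, hj⟩
  · refine ⟨fun _ => ?_, by simp⟩
    rcases hj with ⟨rfl, h⟩ | ⟨ha, h⟩ | ⟨ha, h1, h2⟩
    · exact ⟨.atom b1 b2, rfl, by simpa [QF.freeVars] using h⟩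
    · obtain ⟨ψ, e, hv⟩ := (hL _ h).1 rfl
      rcases ha with rfl | rfl
      · exact ⟨.neg ψ, by simp only [QF.codeWith, e], hv⟩
      · exact ⟨.next ψ, by simp only [QF.codeWith, e], hv⟩
    · obtain ⟨ψ, e, hv⟩ := (hL _ h1).1 rfl
      obtain ⟨ψ', e', hv'⟩ := (hL _ h2).1 rfl
      rcases ha with rfl | rfl
      · refine ⟨.disj ψ ψ', by simp only [QF.codeWith, e, e'], ?_⟩
        rintro x (h | h)
        exacts [hv x h, hv' x h]
      · refine ⟨.untl ψ ψ', by simp only [QF.codeWith, e, e'], ?_⟩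
        rintro x (h | h)
        exacts [hv x h, hv' x h]
  · refine ⟨by simp, fun _ => ?_⟩
    rcases hj with ⟨rfl, h⟩ | ⟨ha, h⟩
    · obtain ⟨ψ, e, hv⟩ := (hL _ h).1 rfl
      exact ⟨.qf ψ, by simp only [HFormula.codeWith, e], hv⟩
    · obtain ⟨φ, e, hv⟩ := (hL _ h).2 rfl
      have hv' : ∀ x ∈ φ.freeVars \ {b1}, x ∈ ctx := by
        rintro x ⟨h1, h2⟩
        rcases List.mem_cons.1 (hv x h1) with h | h
        · exact absurd h h2
        · exact h
      rcases ha with rfl | rfl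
      · exact ⟨.ex b1 φ, by simp only [HFormula.codeWith, e], hv'⟩
      · exact ⟨.all b1 φ, by simp only [HFormula.codeWith, e], hv'⟩

theorem WDer_qf (ψ : QF ℕ) (ctx : List ℕ) (h : ∀ x ∈ ψ.freeVars, x ∈ ctx) :
    Der WJust () (0, cq ψ, ctx) := by
  induction ψ with
  | atom a x =>
    exact Der.step WJust_mono [] (by simp) (by simpa [WJust, QF.codeWith] using h x rfl)
  | neg ψ ih =>
    exact Der.step WJust_mono [(0, cq ψ, ctx)] (by simpa using ih h) (by simp [WJust, QF.codeWith])
  | next ψ ih =>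
    exact Der.step WJust_mono [(0, cq ψ, ctx)] (by simpa using ih h) (by simp [WJust, QF.codeWith])
  | disj ψ₁ ψ₂ ih1 ih2 =>
    exact Der.step WJust_mono [(0, cq ψ₁, ctx), (0, cq ψ₂, ctx)]
      (by simpa using ⟨ih1 fun x hx => h x (Or.inl hx), ih2 fun x hx => h x (Or.inr hx)⟩)
      (by simp [WJust, QF.codeWith])
  | untl ψ₁ ψ₂ ih1 ih2 =>
    exact Der.step WJust_mono [(0, cq ψ₁, ctx), (0, cq ψ₂, ctx)]
      (by simpa using ⟨ih1 fun x hx => h x (Or.inl hx), ih2 fun x hx => h x (Or.inr hx)⟩)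
      (by simp [WJust, QF.codeWith])

theorem WDer_hf (φ : HFormula ℕ) (ctx : List ℕ) (h : ∀ x ∈ φ.freeVars, x ∈ ctx) :
    Der WJust () (1, ch φ, ctx) := by
  induction φ generalizing ctx with
  | ex x φ ih =>
    refine Der.step WJust_mono [(1, ch φ, x :: ctx)] ?_ (by simp [WJust, HFormula.codeWith])
    simp only [List.mem_singleton, forall_eq]
    apply ih
    intro y hy
    by_cases e : y = x
    · simp [e]
    · exact List.mem_cons_of_mem _ (h y ⟨hy, e⟩)
  | all x φ ih =>
    refine Der.step WJust_mono [(1, ch φ, x :: ctx)] ?_ (by simp [WJust, HFormula.codeWith])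
    simp only [List.mem_singleton, forall_eq]
    apply ih
    intro y hy
    by_cases e : y = x
    · simp [e]
    · exact List.mem_cons_of_mem _ (h y ⟨hy, e⟩)
  | qf ψ =>
    exact Der.step WJust_mono [(0, cq ψ, ctx)] (by simpa using WDer_qf ψ ctx h)
      (by simp [WJust, HFormula.codeWith])

theorem WDer_iff (n : ℕ) :
    Der WJust () (1, n, []) ↔ ∃ φ : HFormula ℕ, φ.IsSentence ∧ ch φ = n := by
  constructor
  · intro h
    obtain ⟨φ, e, hv⟩ := (WDer_sound h).2 rfl
    refine ⟨φ, ?_, e⟩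
    apply Set.eq_empty_of_forall_notMem
    intro x hx
    simpa using hv x hx
  · rintro ⟨φ, h, rfl⟩
    refine WDer_hf φ [] ?_
    intro x hx
    rw [h] at hx
    exact hx.elim


/-! ### The derivation system for satisfaction -/

abbrev La : Type := (ℕ × ℕ) × List ℕ
abbrev Env : Type := List (ℕ × La)
abbrev SJ : Type := ℕ × ℕ × ℕ × (ℕ × ℕ) × Env

/-- State at position `i` of a coded ultimately periodic path. -/
def lv (m : ℕ) (z : La) (i : ℕ) : ℕ :=
  z.2.getD (if i < z.1.1 then i else z.1.1 + (i - z.1.1) % z.1.2) m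

def val (m : ℕ) (As : Env) (x i : ℕ) : ℕ := ((As.lookup x).map (fun z => lv m z i)).getD m

def EW (m : ℕ) (As : Env) : JW := fun i x => val m As x i

theorem EW_cons (m : ℕ) (x : ℕ) (z : La) (As : Env) :
    EW m ((x, z) :: As) = upd (EW m As) x (lv m z) := by
  funext i y
  by_cases h : y = x
  · subst h; simp [EW, val, upd]
  · have : (y == x) = false := by simpa using h
    simp [EW, val, upd, List.lookup, this, h]

def npq (m b : ℕ) (pq : ℕ × ℕ) : ℕ × ℕ :=
  (pq.1 + pq.2 * Nb m b, pq.2 * (Nb m b).factorial)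

/-- Valid path codes. -/
def vp (θ : Th) (z : La) : Prop :=
  lv θ.1 z 0 = θ.2.1 ∧ ∀ i < z.1.1 + z.1.2,
    lv θ.1 z i < θ.1 ∧ (lv θ.1 z i, lv θ.1 z (i + 1)) ∈ θ.2.2.2

def allLists (m : ℕ) : ℕ → List (List ℕ)
  | 0 => [[]]
  | k + 1 => (allLists m k).flatMap fun l => (List.range m).map fun v => v :: l

theorem mem_allLists (m : ℕ) (l : List ℕ) (h : ∀ v ∈ l, v < m) : l ∈ allLists m l.length := by
  induction l with
  | nil => simp [allLists]
  | cons v l ih =>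
    simp only [allLists, List.length_cons, List.mem_flatMap, List.mem_map, List.mem_range]
    exact ⟨l, ih fun u hu => h u (List.mem_cons_of_mem _ hu), v, h v List.mem_cons_self, rfl⟩

theorem lv_per (m : ℕ) (z : La) (i : ℕ) (h : z.1.1 ≤ i) : lv m z (i + z.1.2) = lv m z i := by
  unfold lv
  rw [if_neg (by omega), if_neg (by omega), show i + z.1.2 - z.1.1 = i - z.1.1 + z.1.2 by omega,
    Nat.add_mod_right]

theorem lv_of (m p q : ℕ) (hq : 0 < q) (ρ : ℕ → ℕ) (h : ∀ i, p ≤ i → ρ (i + q) = ρ i) :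
    lv m ((p, q), (List.range (p + q)).map ρ) = ρ := by
  funext i
  unfold lv
  dsimp only
  by_cases hi : i < p
  · rw [if_pos hi]
    simp [List.getD, show i < p + q by omega]
  · rw [if_neg hi]
    have h1 := Nat.mod_lt (i - p) hq
    have h2 := per_mul h ((i - p) / q) (p + (i - p) % q) (by omega)
    have h3 : p + (i - p) % q + q * ((i - p) / q) = i := by
      have := Nat.mod_add_div (i - p) q
      omega
    rw [h3] at h2
    rw [h2]
    simp [List.getD, h1]

theorem vp_isP {θ : Th} {z : La} (hq : 0 < z.1.2) (h : vp θ z) : θ.P (lv θ.1 z) := by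
  refine ⟨h.1, ?_⟩
  intro i
  induction i using Nat.strong_induction_on with
  | _ i ih =>
    by_cases hi : i < z.1.1 + z.1.2
    · exact h.2 i hi
    · have := ih (i - z.1.2) (by omega)
      have e1 := lv_per θ.1 z (i - z.1.2) (by omega)
      have e2 := lv_per θ.1 z (i - z.1.2 + 1) (by omega)
      rw [show i - z.1.2 + z.1.2 = i by omega] at e1
      rw [show i - z.1.2 + 1 + z.1.2 = i + 1 by omega] at e2
      rw [← e1, ← e2] at this
      exact this

def jd (c : SJ) (t n i : ℕ) : SJ := (t, n, i, c.2.2.2)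

def ext (m : ℕ) (c : SJ) (l : List ℕ) : SJ :=
  (2, c.2.1.unpair.2.unpair.2, 0, npq m c.2.1.unpair.2.unpair.2 c.2.2.2.1,
    (c.2.1.unpair.2.unpair.1, (npq m c.2.1.unpair.2.unpair.2 c.2.2.2.1, l)) :: c.2.2.2.2)

def lst (c : SJ) : List ℕ := (c.2.2.2.2.headI).2.2

def JT (θ : Th) (c : SJ) (L : List SJ) : Prop :=
  (c.2.1.unpair.1 = 0 ∧
      (val θ.1 c.2.2.2.2 c.2.1.unpair.2.unpair.2 c.2.2.1, c.2.1.unpair.2.unpair.1) ∈ θ.2.2.1) ∨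
  (c.2.1.unpair.1 = 1 ∧ jd c 0 c.2.1.unpair.2 c.2.2.1 ∈ L) ∨
  (c.2.1.unpair.1 = 2 ∧ (jd c 1 c.2.1.unpair.2.unpair.1 c.2.2.1 ∈ L ∨
    jd c 1 c.2.1.unpair.2.unpair.2 c.2.2.1 ∈ L)) ∨
  (c.2.1.unpair.1 = 3 ∧ jd c 1 c.2.1.unpair.2 (c.2.2.1 + 1) ∈ L) ∨
  (c.2.1.unpair.1 = 4 ∧ (jd c 1 c.2.1.unpair.2.unpair.2 c.2.2.1 ∈ L ∨
    (jd c 1 c.2.1.unpair.2.unpair.1 c.2.2.1 ∈ L ∧ jd c 1 c.2.1 (c.2.2.1 + 1) ∈ L)))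

def JF (θ : Th) (c : SJ) (L : List SJ) : Prop :=
  (c.2.1.unpair.1 = 0 ∧
      ¬ (val θ.1 c.2.2.2.2 c.2.1.unpair.2.unpair.2 c.2.2.1, c.2.1.unpair.2.unpair.1) ∈ θ.2.2.1) ∨
  (c.2.1.unpair.1 = 1 ∧ jd c 1 c.2.1.unpair.2 c.2.2.1 ∈ L) ∨
  (c.2.1.unpair.1 = 2 ∧ jd c 0 c.2.1.unpair.2.unpair.1 c.2.2.1 ∈ L ∧
    jd c 0 c.2.1.unpair.2.unpair.2 c.2.2.1 ∈ L) ∨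
  (c.2.1.unpair.1 = 3 ∧ jd c 0 c.2.1.unpair.2 (c.2.2.1 + 1) ∈ L) ∨
  (c.2.1.unpair.1 = 4 ∧ jd c (3 + (c.2.2.2.1.1 + c.2.2.2.1.2)) c.2.1 c.2.2.1 ∈ L)

def JR (c : SJ) (L : List SJ) : Prop :=
  jd c 0 c.2.1.unpair.2.unpair.2 c.2.2.1 ∈ L ∧
    (jd c 0 c.2.1.unpair.2.unpair.1 c.2.2.1 ∈ L ∨ c.1 = 3 ∨
      jd c (c.1 - 1) c.2.1 (c.2.2.1 + 1) ∈ L)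

def JH (θ : Th) (c : SJ) (L : List SJ) : Prop :=
  (c.2.1.unpair.1 = 2 ∧ jd c 1 c.2.1.unpair.2 0 ∈ L) ∨
  (c.2.1.unpair.1 = 0 ∧ ∃ e ∈ L, e = ext θ.1 c (lst e) ∧
    vp θ (npq θ.1 c.2.1.unpair.2.unpair.2 c.2.2.2.1, lst e)) ∨
  (c.2.1.unpair.1 = 1 ∧ ∀ l ∈ allLists θ.1
      ((npq θ.1 c.2.1.unpair.2.unpair.2 c.2.2.2.1).1 +
        (npq θ.1 c.2.1.unpair.2.unpair.2 c.2.2.2.1).2),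
    vp θ (npq θ.1 c.2.1.unpair.2.unpair.2 c.2.2.2.1, l) → ext θ.1 c l ∈ L)

def SJust (θ : Th) (c : SJ) (L : List SJ) : Prop :=
  (c.1 = 0 ∧ JF θ c L) ∨ (c.1 = 1 ∧ JT θ c L) ∨ (c.1 = 2 ∧ JH θ c L) ∨ (3 ≤ c.1 ∧ JR c L)

theorem SJust_mono : Mono SJust := by
  intro θ c L L' h hj
  rcases hj with ⟨h0, h1⟩ | ⟨h0, h1⟩ | ⟨h0, h1⟩ | ⟨h0, h1⟩
  · refine Or.inl ⟨h0, ?_⟩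
    unfold JF at h1 ⊢
    have := @h
    grind
  · refine Or.inr (Or.inl ⟨h0, ?_⟩)
    unfold JT at h1 ⊢
    have := @h
    grind
  · refine Or.inr (Or.inr (Or.inl ⟨h0, ?_⟩))
    rcases h1 with ⟨h1, h2⟩ | ⟨h1, e, he, h2⟩ | ⟨h1, h2⟩
    · exact Or.inl ⟨h1, h _ h2⟩
    · exact Or.inr (Or.inl ⟨h1, e, h _ he, h2⟩)
    · exact Or.inr (Or.inr ⟨h1, fun l hl hv => h _ (h2 l hl hv)⟩)
  · refine Or.inr (Or.inr (Or.inr ⟨h0, ?_⟩))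
    unfold JR at h1 ⊢
    have := @h
    grind

/-! #### Soundness -/

def Inv (m : ℕ) (pq : ℕ × ℕ) (As : Env) : Prop :=
  0 < pq.2 ∧ ∀ i, pq.1 ≤ i → EW m As (i + pq.2) = EW m As i

/-- bounded until -/
def BU (θ : Th) (ψ₁ ψ₂ : QF ℕ) (w : JW) (r : ℕ) : Prop :=
  ∃ j ≤ r, ψ₂.sat (tr θ.lab (sh w j)) ∧ ∀ j' < j, ψ₁.sat (tr θ.lab (sh w j'))

def Good (θ : Th) (c : SJ) : Prop :=
  Inv θ.1 c.2.2.2.1 c.2.2.2.2 →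
  (c.1 = 0 → ∀ ψ : QF ℕ, cq ψ = c.2.1 →
    ¬ ψ.sat (tr θ.lab (sh (EW θ.1 c.2.2.2.2) c.2.2.1))) ∧
  (c.1 = 1 → ∀ ψ : QF ℕ, cq ψ = c.2.1 →
    ψ.sat (tr θ.lab (sh (EW θ.1 c.2.2.2.2) c.2.2.1))) ∧
  (c.1 = 2 → ∀ φ : HFormula ℕ, ch φ = c.2.1 → hs θ.lab θ.P φ (EW θ.1 c.2.2.2.2)) ∧
  (3 ≤ c.1 → ∀ ψ₁ ψ₂ : QF ℕ, cq (.untl ψ₁ ψ₂) = c.2.1 →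
    ¬ BU θ ψ₁ ψ₂ (sh (EW θ.1 c.2.2.2.2) c.2.2.1) (c.1 - 3))

theorem Inv_ext {m b x : ℕ} {pq : ℕ × ℕ} {As : Env} (l : List ℕ) (h : Inv m pq As) :
    Inv m (npq m b pq) ((x, (npq m b pq, l)) :: As) := by
  refine ⟨Nat.mul_pos h.1 (Nat.factorial_pos _), fun i hi => ?_⟩
  have h1 := lv_per m (npq m b pq, l) i hi
  have h2 : EW m As (i + (npq m b pq).2) = EW m As i :=
    per_mul h.2 _ i ((Nat.le_add_right _ _).trans hi)
  rw [EW_cons]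
  simp only [upd]
  rw [h2]
  exact congrArg _ h1

theorem sat_sh_sh (θ : Th) (ψ : QF ℕ) (w : JW) (a b : ℕ) :
    ψ.sat (tr θ.lab (sh (sh w a) b)) ↔ ψ.sat (tr θ.lab (sh w (a + b))) := by rw [sh_sh]

theorem sat_untl (θ : Th) (ψ₁ ψ₂ : QF ℕ) (w : JW) :
    (QF.untl ψ₁ ψ₂).sat (tr θ.lab w) ↔ ∃ r, BU θ ψ₁ ψ₂ w r := by
  constructor
  · rintro ⟨j, h⟩; exact ⟨j, j, le_rfl, h⟩
  · rintro ⟨r, j, -, h⟩; exact ⟨j, h⟩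

theorem BU_zero (θ : Th) (ψ₁ ψ₂ : QF ℕ) (w : JW) :
    BU θ ψ₁ ψ₂ w 0 ↔ ψ₂.sat (tr θ.lab w) := by
  constructor
  · rintro ⟨j, hj, h, -⟩
    obtain rfl : j = 0 := by omega
    exact h
  · intro h; exact ⟨0, le_rfl, h, by simp⟩

theorem BU_succ (θ : Th) (ψ₁ ψ₂ : QF ℕ) (w : JW) (r : ℕ) :
    BU θ ψ₁ ψ₂ w (r + 1) ↔
      ψ₂.sat (tr θ.lab w) ∨ (ψ₁.sat (tr θ.lab w) ∧ BU θ ψ₁ ψ₂ (sh w 1) r) := by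
  constructor
  · rintro ⟨j, hj, h, h'⟩
    cases j with
    | zero => exact Or.inl h
    | succ j =>
      refine Or.inr ⟨h' 0 (by omega), j, by omega, ?_, ?_⟩
      · rw [sh_sh, Nat.add_comm]; exact h
      · intro k hk
        rw [sh_sh, Nat.add_comm]; exact h' (k + 1) (by omega)
  · rintro (h | ⟨h, j, hj, h1, h2⟩)
    · exact ⟨0, by omega, h, by simp⟩
    · refine ⟨j + 1, by omega, ?_, ?_⟩
      · rw [sh_sh, Nat.add_comm] at h1; exact h1
      · intro k hk
        cases k with
        | zero => exact h
        | succ k =>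
          have := h2 k (by omega)
          rw [sh_sh, Nat.add_comm] at this; exact this

theorem BU_bound (θ : Th) (ψ₁ ψ₂ : QF ℕ) (w : JW) (p q i : ℕ) (hq : 0 < q)
    (hp : ∀ i, p ≤ i → w (i + q) = w i) (r : ℕ) (h : BU θ ψ₁ ψ₂ (sh w i) r) :
    BU θ ψ₁ ψ₂ (sh w i) (p + q) := by
  obtain ⟨j, -, h1, h2⟩ := h
  induction j using Nat.strong_induction_on with
  | _ j ih =>
    by_cases hj : j ≤ p + q
    · exact ⟨j, hj, h1, h2⟩
    · refine ih (j - q) (by omega) ?_ (fun k hk => h2 k (by omega))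
      have : sh (sh w i) (j - q) = sh (sh w i) j := by
        funext k
        simp only [sh]
        rw [← hp (k + (j - q) + i) (by omega)]
        congr 1
        omega
      rw [this]; exact h1

theorem lasso_list {θ : Th} {m : ℕ} (hm : θ.1 = m) {L : JW → Prop} {k x : ℕ} {As : Env}
    {pq : ℕ × ℕ} (hR : Recog L (Bd m k)) (hI : Inv m pq As)
    (h : ∃ ρ, θ.P ρ ∧ L (upd (EW m As) x ρ)) :
    ∃ l ∈ allLists m ((npq m k pq).1 + (npq m k pq).2), vp θ (npq m k pq, l) ∧
      L (EW m ((x, (npq m k pq, l)) :: As)) := by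
  subst hm
  obtain ⟨ρ, hρ, hL⟩ := h
  obtain ⟨ρ', h1, h2, h3⟩ := hR.lasso hI.1 hI.2 x ρ hρ hL
  have hq : 0 < (npq θ.1 k pq).2 := Nat.mul_pos hI.1 (Nat.factorial_pos _)
  have e := lv_of θ.1 (npq θ.1 k pq).1 (npq θ.1 k pq).2 hq ρ' h1
  refine ⟨(List.range ((npq θ.1 k pq).1 + (npq θ.1 k pq).2)).map ρ', ?_, ?_, ?_⟩
  · have := mem_allLists θ.1
      ((List.range ((npq θ.1 k pq).1 + (npq θ.1 k pq).2)).map ρ') (by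
        intro v hv
        obtain ⟨i, -, rfl⟩ := List.mem_map.1 hv
        exact (h2.2 i).1)
    simpa using this
  · refine ⟨?_, fun i _ => ?_⟩
    · exact (congrFun e 0).trans h2.1
    · have := h2.2 i
      have e1 := congrFun e i
      have e2 := congrFun e (i + 1)
      rw [← e1, ← e2] at this
      exact this
  · rw [EW_cons]
    have : lv θ.1 (npq θ.1 k pq, (List.range ((npq θ.1 k pq).1 + (npq θ.1 k pq).2)).map ρ') = ρ' := e
    rw [this]
    exact h3

theorem ext_eq (m t : ℕ) (x k i : ℕ) (u : ℕ) (pq : ℕ × ℕ) (As : Env) (l : List ℕ) :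
    ext m (t, Nat.pair u (Nat.pair x k), i, pq, As) l =
      (2, k, 0, npq m k pq, (x, (npq m k pq, l)) :: As) := by
  simp [ext]

theorem SJ_sound (θ : Th) (c : SJ) (L : List SJ) (hL : ∀ e ∈ L, Good θ e) (hj : SJust θ c L) :
    Good θ c := by
  obtain ⟨t, n, i, pq, As⟩ := c
  intro hI
  dsimp only at hI ⊢
  have gF : ∀ n i, (0, n, i, pq, As) ∈ L → ∀ ψ : QF ℕ, cq ψ = n →
    ¬ ψ.sat (tr θ.lab (sh (EW θ.1 As) i)) := fun n i h => (hL _ h hI).1 rfl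
  have gT : ∀ n i, (1, n, i, pq, As) ∈ L → ∀ ψ : QF ℕ, cq ψ = n →
    ψ.sat (tr θ.lab (sh (EW θ.1 As) i)) := fun n i h => (hL _ h hI).2.1 rfl
  have gR : ∀ t n i, 3 ≤ t → (t, n, i, pq, As) ∈ L → ∀ ψ₁ ψ₂ : QF ℕ, cq (.untl ψ₁ ψ₂) = n →
    ¬ BU θ ψ₁ ψ₂ (sh (EW θ.1 As) i) (t - 3) := fun t n i ht h => (hL _ h hI).2.2.2 ht
  rcases hj with ⟨h0, h1⟩ | ⟨h0, h1⟩ | ⟨h0, h1⟩ | ⟨h0, h1⟩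
  · dsimp only at h0
    subst h0
    refine ⟨fun _ => ?_, by simp, by simp, by simp⟩
    intro ψ hψ
    subst hψ
    unfold JF jd at h1
    cases ψ with
    | atom a x =>
      simp [QF.codeWith] at h1
      simpa [QF.sat, tr, Th.lab, sh, EW] using h1
    | neg ψ =>
      simp [QF.codeWith] at h1
      exact not_not.2 (gT _ _ h1 ψ rfl)
    | disj ψ₁ ψ₂ =>
      simp [QF.codeWith] at h1
      exact not_or.2 ⟨gF _ _ h1.1 ψ₁ rfl, gF _ _ h1.2 ψ₂ rfl⟩
    | next ψ =>
      simp [QF.codeWith] at h1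
      have := gF _ _ h1 ψ rfl
      rw [← sh_sh] at this
      exact this
    | untl ψ₁ ψ₂ =>
      simp [QF.codeWith] at h1
      have := gR _ _ _ (by omega) h1 ψ₁ ψ₂ rfl
      rw [sat_untl]
      rintro ⟨r, hr⟩
      apply this
      have := BU_bound θ ψ₁ ψ₂ _ pq.1 pq.2 i hI.1 hI.2 r hr
      simpa using this
  · dsimp only at h0
    subst h0
    refine ⟨by simp, fun _ => ?_, by simp, by simp⟩
    intro ψ hψ
    subst hψ
    unfold JT jd at h1
    cases ψ with
    | atom a x =>
      simp [QF.codeWith] at h1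
      simpa [QF.sat, tr, Th.lab, sh, EW] using h1
    | neg ψ =>
      simp [QF.codeWith] at h1
      exact gF _ _ h1 ψ rfl
    | disj ψ₁ ψ₂ =>
      simp [QF.codeWith] at h1
      exact h1.imp (fun h => gT _ _ h ψ₁ rfl) (fun h => gT _ _ h ψ₂ rfl)
    | next ψ =>
      simp [QF.codeWith] at h1
      have := gT _ _ h1 ψ rfl
      rw [← sh_sh] at this
      exact this
    | untl ψ₁ ψ₂ =>
      simp [QF.codeWith] at h1
      rw [sat_untl]
      rcases h1 with h1 | ⟨h1, h2⟩
      · exact ⟨0, (BU_zero _ _ _ _).2 (gT _ _ h1 ψ₂ rfl)⟩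
      · have := gT _ _ h2 (.untl ψ₁ ψ₂) rfl
        rw [sat_untl] at this
        obtain ⟨r, hr⟩ := this
        refine ⟨r + 1, (BU_succ _ _ _ _ _).2 (Or.inr ⟨gT _ _ h1 ψ₁ rfl, ?_⟩)⟩
        rw [sh_sh]; exact hr
  · dsimp only at h0
    subst h0
    refine ⟨by simp, by simp, fun _ => ?_, by simp⟩
    intro φ hφ
    subst hφ
    unfold JH at h1
    cases φ with
    | ex x φ =>
      simp only [HFormula.codeWith, Nat.unpair_pair, ext_eq] at h1
      obtain ⟨h0, -⟩ | ⟨-, e, he, h1, h2⟩ | ⟨h0, -⟩ := h1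
      · exact absurd h0 (by decide)
      swap
      · exact absurd h0 (by decide)
      have hI' := Inv_ext (b := ch φ) (x := x) (lst e) hI
      rw [h1] at he
      have := (hL _ he hI').2.2.1 rfl φ rfl
      dsimp only at this
      rw [EW_cons] at this
      exact ⟨_, vp_isP (Nat.mul_pos hI.1 (Nat.factorial_pos _)) h2, this⟩
    | all x φ =>
      simp only [HFormula.codeWith, Nat.unpair_pair, ext_eq] at h1
      have h2 : ∀ l ∈ allLists θ.1 ((npq θ.1 (ch φ) pq).1 + (npq θ.1 (ch φ) pq).2),
        vp θ (npq θ.1 (ch φ) pq, l) → (2, ch φ, 0, npq θ.1 (ch φ) pq,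
          (x, npq θ.1 (ch φ) pq, l) :: As) ∈ L := by simpa using h1
      by_contra hcon
      simp only [hs] at hcon
      push Not at hcon
      obtain ⟨l, hl, hv, hnot⟩ := lasso_list rfl (Recog_hs θ.lab θ.1 θ.2.1 θ.E φ).neg hI hcon
      have hI' := Inv_ext (b := ch φ) (x := x) l hI
      exact hnot ((hL _ (h2 l hl hv) hI').2.2.1 rfl φ rfl)
    | qf ψ =>
      simp [HFormula.codeWith, jd] at h1
      exact gT _ _ h1 ψ rfl
  · dsimp only at h0
    refine ⟨by omega, by omega, by omega, fun _ => ?_⟩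
    intro ψ₁ ψ₂ hψ
    subst hψ
    unfold JR jd at h1
    simp [QF.codeWith] at h1
    obtain ⟨h1, h2⟩ := h1
    have n2 := gF _ _ h1 ψ₂ rfl
    rcases Nat.eq_zero_or_pos (t - 3) with ht | ht
    · rw [ht, BU_zero]; exact n2
    · obtain ⟨r, hr⟩ : ∃ r, t - 3 = r + 1 := ⟨t - 3 - 1, by omega⟩
      rw [hr, BU_succ]
      rintro (h | ⟨h, h'⟩)
      · exact n2 h
      · rcases h2 with h2 | h2 | h2
        · exact gF _ _ h2 ψ₁ rfl h
        · omega
        · have := gR _ _ _ (by omega) h2 ψ₁ ψ₂ rfl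
          rw [show t - 1 - 3 = r by omega, ← sh_sh] at this
          exact this h'


theorem SJ_complete_qf (θ : Th) (pq : ℕ × ℕ) (As : Env) (ψ : QF ℕ) : ∀ i,
    (ψ.sat (tr θ.lab (sh (EW θ.1 As) i)) → Der SJust θ (1, cq ψ, i, pq, As)) ∧
    (¬ ψ.sat (tr θ.lab (sh (EW θ.1 As) i)) → Der SJust θ (0, cq ψ, i, pq, As)) := by
  induction ψ with
  | atom a x =>
    intro i
    constructor
    · intro h
      refine Der.step SJust_mono [] (by simp) (Or.inr (Or.inl ⟨rfl, Or.inl ?_⟩))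
      simpa [QF.codeWith, QF.sat, tr, Th.lab, sh, EW] using h
    · intro h
      refine Der.step SJust_mono [] (by simp) (Or.inl ⟨rfl, Or.inl ?_⟩)
      simpa [QF.codeWith, QF.sat, tr, Th.lab, sh, EW] using h
  | neg ψ ih =>
    intro i
    constructor
    · intro h
      refine Der.step SJust_mono [(0, cq ψ, i, pq, As)] (by simpa using (ih i).2 h)
        (Or.inr (Or.inl ⟨rfl, ?_⟩))
      simp [JT, QF.codeWith, jd]
    · intro h
      refine Der.step SJust_mono [(1, cq ψ, i, pq, As)] (by simpa using (ih i).1 (not_not.1 h))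
        (Or.inl ⟨rfl, ?_⟩)
      simp [JF, QF.codeWith, jd]
  | disj ψ₁ ψ₂ ih1 ih2 =>
    intro i
    constructor
    · rintro (h | h)
      · refine Der.step SJust_mono [(1, cq ψ₁, i, pq, As)] (by simpa using (ih1 i).1 h)
          (Or.inr (Or.inl ⟨rfl, ?_⟩))
        simp [JT, QF.codeWith, jd]
      · refine Der.step SJust_mono [(1, cq ψ₂, i, pq, As)] (by simpa using (ih2 i).1 h)
          (Or.inr (Or.inl ⟨rfl, ?_⟩))
        simp [JT, QF.codeWith, jd]
    · intro h
      obtain ⟨h1, h2⟩ := not_or.1 h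
      refine Der.step SJust_mono [(0, cq ψ₁, i, pq, As), (0, cq ψ₂, i, pq, As)]
        (by simpa using ⟨(ih1 i).2 h1, (ih2 i).2 h2⟩) (Or.inl ⟨rfl, ?_⟩)
      simp [JF, QF.codeWith, jd]
  | next ψ ih =>
    intro i
    constructor
    · intro h
      have h' : ψ.sat (tr θ.lab (sh (EW θ.1 As) (i + 1))) := by rw [← sh_sh]; exact h
      refine Der.step SJust_mono [(1, cq ψ, i + 1, pq, As)] (by simpa using (ih (i + 1)).1 h')
        (Or.inr (Or.inl ⟨rfl, ?_⟩))
      simp [JT, QF.codeWith, jd]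
    · intro h
      have h' : ¬ ψ.sat (tr θ.lab (sh (EW θ.1 As) (i + 1))) := by rw [← sh_sh]; exact h
      refine Der.step SJust_mono [(0, cq ψ, i + 1, pq, As)] (by simpa using (ih (i + 1)).2 h')
        (Or.inl ⟨rfl, ?_⟩)
      simp [JF, QF.codeWith, jd]
  | untl ψ₁ ψ₂ ih1 ih2 =>
    have hpos : ∀ r i, BU θ ψ₁ ψ₂ (sh (EW θ.1 As) i) r →
        Der SJust θ (1, cq (.untl ψ₁ ψ₂), i, pq, As) := by
      have base : ∀ i, ψ₂.sat (tr θ.lab (sh (EW θ.1 As) i)) →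
          Der SJust θ (1, cq (.untl ψ₁ ψ₂), i, pq, As) := by
        intro i h
        refine Der.step SJust_mono [(1, cq ψ₂, i, pq, As)] (by simpa using (ih2 i).1 h)
          (Or.inr (Or.inl ⟨rfl, ?_⟩))
        simp [JT, QF.codeWith, jd]
      intro r
      induction r with
      | zero => intro i h; exact base i ((BU_zero _ _ _ _).1 h)
      | succ r ih =>
        intro i h
        rcases (BU_succ _ _ _ _ _).1 h with h | ⟨h1, h2⟩
        · exact base i h
        · rw [sh_sh] at h2
          refine Der.step SJust_mono
            [(1, cq ψ₁, i, pq, As), (1, cq (.untl ψ₁ ψ₂), i + 1, pq, As)]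
            (by simpa using ⟨(ih1 i).1 h1, ih _ h2⟩) (Or.inr (Or.inl ⟨rfl, ?_⟩))
          simp [JT, QF.codeWith, jd]
    have hneg : ∀ r i, ¬ BU θ ψ₁ ψ₂ (sh (EW θ.1 As) i) r →
        Der SJust θ (3 + r, cq (.untl ψ₁ ψ₂), i, pq, As) := by
      intro r
      induction r with
      | zero =>
        intro i h
        rw [BU_zero] at h
        refine Der.step SJust_mono [(0, cq ψ₂, i, pq, As)] (by simpa using (ih2 i).2 h)
          (Or.inr (Or.inr (Or.inr ⟨by simp, ?_⟩)))
        simp [JR, QF.codeWith, jd]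
      | succ r ih =>
        intro i h
        rw [BU_succ, not_or, not_and_or, sh_sh] at h
        obtain ⟨h1, h2 | h2⟩ := h
        · refine Der.step SJust_mono [(0, cq ψ₂, i, pq, As), (0, cq ψ₁, i, pq, As)]
            (by simpa using ⟨(ih2 i).2 h1, (ih1 i).2 h2⟩)
            (Or.inr (Or.inr (Or.inr ⟨by simp, ?_⟩)))
          simp [JR, QF.codeWith, jd]
        · refine Der.step SJust_mono
            [(0, cq ψ₂, i, pq, As), (3 + r, cq (.untl ψ₁ ψ₂), i + 1, pq, As)]
            (by simpa using ⟨(ih2 i).2 h1, ih _ h2⟩)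
            (Or.inr (Or.inr (Or.inr ⟨by simp, ?_⟩)))
          simp [JR, QF.codeWith, jd, show 3 + (r + 1) - 1 = 3 + r by omega]
    intro i
    rw [sat_untl]
    constructor
    · rintro ⟨r, hr⟩; exact hpos r i hr
    · intro h
      push Not at h
      refine Der.step SJust_mono [(3 + (pq.1 + pq.2), cq (.untl ψ₁ ψ₂), i, pq, As)]
        (by simpa using hneg _ i (h _)) (Or.inl ⟨rfl, ?_⟩)
      simp [JF, QF.codeWith, jd]

theorem SJ_complete (θ : Th) (φ : HFormula ℕ) : ∀ (pq : ℕ × ℕ) (As : Env), Inv θ.1 pq As →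
    hs θ.lab θ.P φ (EW θ.1 As) → Der SJust θ (2, ch φ, 0, pq, As) := by
  induction φ with
  | ex x φ ih =>
    intro pq As hI h
    obtain ⟨l, -, hv, hh⟩ := lasso_list rfl (Recog_hs θ.lab θ.1 θ.2.1 θ.E φ) hI h
    refine Der.step SJust_mono
      [(2, ch φ, 0, npq θ.1 (ch φ) pq, (x, npq θ.1 (ch φ) pq, l) :: As)]
      (by simpa using ih _ _ (Inv_ext l hI) hh)
      (Or.inr (Or.inr (Or.inl ⟨rfl, Or.inr (Or.inl ?_)⟩)))
    simp only [HFormula.codeWith, Nat.unpair_pair, ext_eq]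
    exact ⟨trivial, _, List.mem_singleton_self _, rfl, hv⟩
  | all x φ ih =>
    intro pq As hI h
    classical
    refine Der.step SJust_mono
      (((allLists θ.1 ((npq θ.1 (ch φ) pq).1 + (npq θ.1 (ch φ) pq).2)).filter
        (fun l => decide (vp θ (npq θ.1 (ch φ) pq, l)))).map
          fun l => (2, ch φ, 0, npq θ.1 (ch φ) pq, (x, npq θ.1 (ch φ) pq, l) :: As)) ?_
      (Or.inr (Or.inr (Or.inl ⟨rfl, Or.inr (Or.inr ?_)⟩)))
    · intro e he
      obtain ⟨l, hl, rfl⟩ := List.mem_map.1 he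
      have hv : vp θ (npq θ.1 (ch φ) pq, l) := by simpa using (List.mem_filter.1 hl).2
      refine ih _ _ (Inv_ext l hI) ?_
      rw [EW_cons]
      exact h _ (vp_isP (Nat.mul_pos hI.1 (Nat.factorial_pos _)) hv)
    · simp only [HFormula.codeWith, Nat.unpair_pair, ext_eq]
      refine ⟨trivial, fun l hl hv => List.mem_map.2 ⟨l, List.mem_filter.2 ⟨hl, by simpa using hv⟩, rfl⟩⟩
  | qf ψ =>
    intro pq As hI h
    refine Der.step SJust_mono [(1, cq ψ, 0, pq, As)]
      (by simpa using (SJ_complete_qf θ pq As ψ 0).1 h)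
      (Or.inr (Or.inr (Or.inl ⟨rfl, Or.inl ?_⟩)))
    simp [HFormula.codeWith, jd]

theorem SJ_iff (θ : Th) (φ : HFormula ℕ) :
    Der SJust θ (2, ch φ, 0, (0, 1), []) ↔ hs θ.lab θ.P φ (fun _ _ => θ.1) := by
  have e : EW θ.1 [] = fun _ _ => θ.1 := by
    funext i x; simp [EW, val]
  have hI : Inv θ.1 (0, 1) [] := ⟨Nat.one_pos, fun i _ => by rw [e]⟩
  rw [← e]
  constructor
  · intro h
    exact (Der.sound (Good θ) (SJ_sound θ) h hI).2.2.1 rfl φ rfl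
  · exact SJ_complete θ φ _ _ hI


/-! ### Primitive recursiveness of the derivation system -/

section
variable {α : Type} [Primcodable α]

theorem pr_pow {f g : α → ℕ} (hf : Primrec f) (hg : Primrec g) : Primrec fun a => f a ^ g a := by
  have : Primrec fun a => Nat.rec (motive := fun _ => ℕ) 1 (fun _ r => r * f a) (g a) :=
    Primrec.nat_rec' hg (Primrec.const 1) (h := fun a z => z.2 * f a) (Primrec.nat_mul.comp
      (Primrec.snd.comp Primrec.snd) (hf.comp Primrec.fst))
  refine this.of_eq fun a => ?_
  induction g a with
  | zero => rfl
  | succ n ih => rw [pow_succ, ← ih]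

theorem pr_fact {g : α → ℕ} (hg : Primrec g) : Primrec fun a => (g a).factorial := by
  have : Primrec fun a => Nat.rec (motive := fun _ => ℕ) 1 (fun n r => (n + 1) * r) (g a) :=
    Primrec.nat_rec' hg (Primrec.const 1) (h := fun _ z => (z.1 + 1) * z.2) (Primrec.nat_mul.comp
      (Primrec.succ.comp (Primrec.fst.comp Primrec.snd)) (Primrec.snd.comp Primrec.snd))
  refine this.of_eq fun a => ?_
  induction g a with
  | zero => rfl
  | succ n ih => rw [Nat.factorial_succ, ← ih]

theorem pr_mul {f g : α → ℕ} (hf : Primrec f) (hg : Primrec g) : Primrec fun a => f a * g a :=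
  Primrec.nat_mul.comp hf hg

theorem pr_add {f g : α → ℕ} (hf : Primrec f) (hg : Primrec g) : Primrec fun a => f a + g a :=
  Primrec.nat_add.comp hf hg

theorem pr_Gb {f g : α → ℕ} (hf : Primrec f) (hg : Primrec g) :
    Primrec fun a => Gb (f a) (g a) := by
  have c2 : Primrec fun _ : α => 2 := Primrec.const 2
  have e := pr_pow c2 hg
  exact pr_add (pr_add (pr_add (pr_mul hg hg) (pr_mul hg (pr_mul hg c2)))
    (pr_mul hg (pr_mul hg (pr_mul e (pr_pow c2 (pr_mul hg e))))))
    (pr_pow c2 (pr_mul hg (pr_pow c2 (pr_mul hf hf))))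

theorem pr_Nb {f g : α → ℕ} (hf : Primrec f) (hg : Primrec g) :
    Primrec fun a => Nb (f a) (g a) := by
  have h : Primrec fun a => Bd (f a) (g a) :=
    Primrec.nat_iterate hg (Primrec.const 2) (pr_Gb (hf.comp Primrec.fst) Primrec.snd)
  exact pr_mul h (pr_pow (Primrec.const 2) (pr_mul hf hf))

theorem pr_npq {f g : α → ℕ} {k : α → ℕ × ℕ} (hf : Primrec f) (hg : Primrec g) (hk : Primrec k) :
    Primrec fun a => npq (f a) (g a) (k a) := by
  have h := pr_Nb hf hg
  have h1 := Primrec.fst.comp hk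
  have h2 := Primrec.snd.comp hk
  exact (pr_add h1 (pr_mul h2 h)).pair (pr_mul h2 (pr_fact h))

theorem pr_getD {f : α → List ℕ} {g d : α → ℕ} (hf : Primrec f) (hg : Primrec g) (hd : Primrec d) :
    Primrec fun a => (f a).getD (g a) (d a) := by
  have := Primrec.option_getD.comp (Primrec.list_getElem?.comp hf hg) hd
  exact this.of_eq fun a => by rw [List.getD]

theorem pr_lv {m i : α → ℕ} {z : α → La} (hm : Primrec m) (hz : Primrec z) (hi : Primrec i) :
    Primrec fun a => lv (m a) (z a) (i a) := by
  have hp := Primrec.fst.comp (Primrec.fst.comp hz)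
  have hq := Primrec.snd.comp (Primrec.fst.comp hz)
  refine pr_getD (Primrec.snd.comp hz) (Primrec.ite (Primrec.nat_lt.comp hi hp) hi ?_) hm
  exact pr_add hp (Primrec.nat_mod.comp (Primrec.nat_sub.comp hi hp) hq)

theorem pr_val {m x i : α → ℕ} {As : α → Env} (hm : Primrec m) (hA : Primrec As)
    (hx : Primrec x) (hi : Primrec i) : Primrec fun a => val (m a) (As a) (x a) (i a) := by
  refine Primrec.option_getD.comp (Primrec.option_map (Primrec.listLookup.comp hx hA) ?_) hm
  exact pr_lv (hm.comp Primrec.fst) Primrec.snd (hi.comp Primrec.fst)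

theorem pp_vp {θ : α → Th} {z : α → La} (hθ : Primrec θ) (hz : Primrec z) :
    PrimrecPred fun a => vp (θ a) (z a) := by
  have hm := Primrec.fst.comp hθ
  have hv := Primrec.fst.comp (Primrec.snd.comp hθ)
  have he := Primrec.snd.comp (Primrec.snd.comp (Primrec.snd.comp hθ))
  have hp := Primrec.fst.comp (Primrec.fst.comp hz)
  have hq := Primrec.snd.comp (Primrec.fst.comp hz)
  refine (Primrec.eq.comp (pr_lv hm hz (Primrec.const 0)) hv).and (ppAllLt (pr_add hp hq) ?_)
  have hm' : Primrec fun y : α × ℕ => (θ y.1).1 := hm.comp Primrec.fst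
  have hz' : Primrec fun y : α × ℕ => z y.1 := hz.comp Primrec.fst
  have h1 := pr_lv hm' hz' Primrec.snd
  have h2 := pr_lv hm' hz' (Primrec.succ.comp Primrec.snd)
  exact (Primrec.nat_lt.comp h1 hm').and (ppMem (h1.pair h2) (he.comp Primrec.fst))

theorem pr_allLists {m k : α → ℕ} (hm : Primrec m) (hk : Primrec k) :
    Primrec fun a => allLists (m a) (k a) := by
  have : Primrec fun a => Nat.rec (motive := fun _ => List (List ℕ)) [[]]
      (fun _ r => r.flatMap fun l => (List.range (m a)).map fun v => v :: l) (k a) := by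
    refine Primrec.nat_rec' hk (Primrec.const [[]])
      (h := fun a z => z.2.flatMap fun l => (List.range (m a)).map fun v => v :: l) ?_
    refine Primrec.list_flatMap (Primrec.snd.comp Primrec.snd) ?_
    refine Primrec.list_map (Primrec.list_range.comp (hm.comp (Primrec.fst.comp Primrec.fst))) ?_
    exact Primrec.list_cons.comp Primrec.snd (Primrec.snd.comp Primrec.fst)
  refine this.of_eq fun a => ?_
  induction k a with
  | zero => rfl
  | succ n ih => rw [allLists, ← ih]

theorem pr_jd {c : α → SJ} {t n i : α → ℕ} (hc : Primrec c) (ht : Primrec t) (hn : Primrec n)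
    (hi : Primrec i) : Primrec fun a => jd (c a) (t a) (n a) (i a) :=
  ht.pair (hn.pair (hi.pair (Primrec.snd.comp (Primrec.snd.comp (Primrec.snd.comp hc)))))

theorem pr_lst {c : α → SJ} (hc : Primrec c) : Primrec fun a => lst (c a) :=
  Primrec.snd.comp (Primrec.snd.comp (Primrec.list_headI.comp
    (Primrec.snd.comp (Primrec.snd.comp (Primrec.snd.comp (Primrec.snd.comp hc))))))

theorem pr_b1 {c : α → SJ} (hc : Primrec c) : Primrec fun a => (c a).2.1.unpair.2.unpair.1 :=
  Primrec.fst.comp (Primrec.unpair.comp (Primrec.snd.comp (Primrec.unpair.comp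
    (Primrec.fst.comp (Primrec.snd.comp hc)))))

theorem pr_b2 {c : α → SJ} (hc : Primrec c) : Primrec fun a => (c a).2.1.unpair.2.unpair.2 :=
  Primrec.snd.comp (Primrec.unpair.comp (Primrec.snd.comp (Primrec.unpair.comp
    (Primrec.fst.comp (Primrec.snd.comp hc)))))

theorem pr_npqc {m : α → ℕ} {c : α → SJ} (hm : Primrec m) (hc : Primrec c) :
    Primrec fun a => npq (m a) (c a).2.1.unpair.2.unpair.2 (c a).2.2.2.1 :=
  pr_npq hm (pr_b2 hc) (Primrec.fst.comp (Primrec.snd.comp (Primrec.snd.comp (Primrec.snd.comp hc))))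

theorem pr_ext {m : α → ℕ} {c : α → SJ} {l : α → List ℕ} (hm : Primrec m) (hc : Primrec c)
    (hl : Primrec l) : Primrec fun a => ext (m a) (c a) (l a) := by
  have hn := pr_npqc hm hc
  refine (Primrec.const 2).pair ((pr_b2 hc).pair ((Primrec.const 0).pair (hn.pair ?_)))
  exact Primrec.list_cons.comp ((pr_b1 hc).pair (hn.pair hl))
    (Primrec.snd.comp (Primrec.snd.comp (Primrec.snd.comp (Primrec.snd.comp hc))))

end

theorem SJust_primrec : PrimrecPred fun z : Th × SJ × List SJ => SJust z.1 z.2.1 z.2.2 := by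
  have hθ : Primrec fun z : Th × SJ × List SJ => z.1 := Primrec.fst
  have hm : Primrec fun z : Th × SJ × List SJ => z.1.1 := Primrec.fst.comp hθ
  have hlb : Primrec fun z : Th × SJ × List SJ => z.1.2.2.1 :=
    Primrec.fst.comp (Primrec.snd.comp (Primrec.snd.comp hθ))
  have hc : Primrec fun z : Th × SJ × List SJ => z.2.1 := Primrec.fst.comp Primrec.snd
  have hL : Primrec fun z : Th × SJ × List SJ => z.2.2 := Primrec.snd.comp Primrec.snd
  have ht : Primrec fun z : Th × SJ × List SJ => z.2.1.1 := Primrec.fst.comp hc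
  have hn : Primrec fun z : Th × SJ × List SJ => z.2.1.2.1 := Primrec.fst.comp (Primrec.snd.comp hc)
  have hi : Primrec fun z : Th × SJ × List SJ => z.2.1.2.2.1 :=
    Primrec.fst.comp (Primrec.snd.comp (Primrec.snd.comp hc))
  have hpq : Primrec fun z : Th × SJ × List SJ => z.2.1.2.2.2.1 :=
    Primrec.fst.comp (Primrec.snd.comp (Primrec.snd.comp (Primrec.snd.comp hc)))
  have hA : Primrec fun z : Th × SJ × List SJ => z.2.1.2.2.2.2 :=
    Primrec.snd.comp (Primrec.snd.comp (Primrec.snd.comp (Primrec.snd.comp hc)))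
  have hu := Primrec.unpair.comp hn
  have ha := Primrec.fst.comp hu
  have hb := Primrec.snd.comp hu
  have hb1 := pr_b1 hc
  have hb2 := pr_b2 hc
  have hi1 : Primrec fun z : Th × SJ × List SJ => z.2.1.2.2.1 + 1 := Primrec.succ.comp hi
  have k := fun (i : ℕ) => Primrec.const (α := Th × SJ × List SJ) i
  have hv := pr_val hm hA hb2 hi
  have hF : PrimrecPred fun z : Th × SJ × List SJ => JF z.1 z.2.1 z.2.2 := by
    refine ((ppEqC ha 0).and (ppMem (hv.pair hb1) hlb).not).or
      (((ppEqC ha 1).and (ppMem (pr_jd hc (k 1) hb hi) hL)).or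
      (((ppEqC ha 2).and ((ppMem (pr_jd hc (k 0) hb1 hi) hL).and
        (ppMem (pr_jd hc (k 0) hb2 hi) hL))).or
      (((ppEqC ha 3).and (ppMem (pr_jd hc (k 0) hb hi1) hL)).or
      ((ppEqC ha 4).and (ppMem (pr_jd hc (pr_add (k 3)
        (pr_add (Primrec.fst.comp hpq) (Primrec.snd.comp hpq))) hn hi) hL)))))
  have hT : PrimrecPred fun z : Th × SJ × List SJ => JT z.1 z.2.1 z.2.2 := by
    refine ((ppEqC ha 0).and (ppMem (hv.pair hb1) hlb)).or
      (((ppEqC ha 1).and (ppMem (pr_jd hc (k 0) hb hi) hL)).or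
      (((ppEqC ha 2).and ((ppMem (pr_jd hc (k 1) hb1 hi) hL).or
        (ppMem (pr_jd hc (k 1) hb2 hi) hL))).or
      (((ppEqC ha 3).and (ppMem (pr_jd hc (k 1) hb hi1) hL)).or
      ((ppEqC ha 4).and ((ppMem (pr_jd hc (k 1) hb2 hi) hL).or
        ((ppMem (pr_jd hc (k 1) hb1 hi) hL).and (ppMem (pr_jd hc (k 1) hn hi1) hL)))))))
  have hR : PrimrecPred fun z : Th × SJ × List SJ => JR z.2.1 z.2.2 := by
    refine (ppMem (pr_jd hc (k 0) hb2 hi) hL).and ((ppMem (pr_jd hc (k 0) hb1 hi) hL).or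
      ((ppEqC ht 3).or (ppMem (pr_jd hc (Primrec.nat_sub.comp ht (k 1)) hn hi1) hL)))
  have hnpq := pr_npqc hm hc
  have hH : PrimrecPred fun z : Th × SJ × List SJ => JH z.1 z.2.1 z.2.2 := by
    refine ((ppEqC ha 2).and (ppMem (pr_jd hc (k 1) hb (k 0)) hL)).or
      (((ppEqC ha 0).and (ppEx hL ?_)).or ((ppEqC ha 1).and (ppAll (pr_allLists hm
        (pr_add (Primrec.fst.comp hnpq) (Primrec.snd.comp hnpq))) ?_)))
    · have hl := pr_lst (Primrec.snd (α := Th × SJ × List SJ) (β := SJ))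
      exact (Primrec.eq.comp Primrec.snd (pr_ext (hm.comp Primrec.fst) (hc.comp Primrec.fst) hl)).and
        (pp_vp (hθ.comp Primrec.fst) ((hnpq.comp Primrec.fst).pair hl))
    · exact ppImp (pp_vp (hθ.comp Primrec.fst) ((hnpq.comp Primrec.fst).pair Primrec.snd))
        (ppMem (pr_ext (hm.comp Primrec.fst) (hc.comp Primrec.fst) Primrec.snd)
          (hL.comp Primrec.fst))
  exact ((ppEqC ht 0).and hF).or (((ppEqC ht 1).and hT).or (((ppEqC ht 2).and hH).or
    ((Primrec.nat_le.comp (k 3) ht).and hR)))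

theorem Th_ok_primrec : PrimrecPred Th.ok := by
  have hm : Primrec fun θ : Th => θ.1 := Primrec.fst
  have hv : Primrec fun θ : Th => θ.2.1 := Primrec.fst.comp Primrec.snd
  have hlb : Primrec fun θ : Th => θ.2.2.1 := Primrec.fst.comp (Primrec.snd.comp Primrec.snd)
  have hed : Primrec fun θ : Th => θ.2.2.2 := Primrec.snd.comp (Primrec.snd.comp Primrec.snd)
  refine (Primrec.nat_lt.comp hv hm).and ((ppAllLt hm (ppExLt (hm.comp Primrec.fst) ?_)).and
    (ppAll hlb ?_))
  · exact ppMem ((Primrec.snd.comp Primrec.fst).pair Primrec.snd)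
      (hed.comp (Primrec.fst.comp Primrec.fst))
  · exact Primrec.nat_lt.comp (Primrec.fst.comp Primrec.snd) (hm.comp Primrec.fst)

theorem ch_inj_qf : ∀ ψ ψ' : QF ℕ, cq ψ = cq ψ' → ψ = ψ' := by
  intro ψ
  induction ψ with
  | atom a x =>
    intro ψ' h
    cases ψ' <;> simp [QF.codeWith] at h ⊢
    exact h
  | neg ψ ih =>
    intro ψ' h
    cases ψ' <;> simp [QF.codeWith] at h ⊢
    exact ih _ h
  | disj ψ₁ ψ₂ ih1 ih2 =>
    intro ψ' h
    cases ψ' <;> simp [QF.codeWith] at h ⊢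
    exact ⟨ih1 _ h.1, ih2 _ h.2⟩
  | next ψ ih =>
    intro ψ' h
    cases ψ' <;> simp [QF.codeWith] at h ⊢
    exact ih _ h
  | untl ψ₁ ψ₂ ih1 ih2 =>
    intro ψ' h
    cases ψ' <;> simp [QF.codeWith] at h ⊢
    exact ⟨ih1 _ h.1, ih2 _ h.2⟩

theorem ch_inj : ∀ φ φ' : HFormula ℕ, ch φ = ch φ' → φ = φ' := by
  intro φ
  induction φ with
  | ex x φ ih =>
    intro φ' h
    cases φ' <;> simp [HFormula.codeWith] at h ⊢
    exact ⟨h.1, ih _ h.2⟩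
  | all x φ ih =>
    intro φ' h
    cases φ' <;> simp [HFormula.codeWith] at h ⊢
    exact ⟨h.1, ih _ h.2⟩
  | qf ψ =>
    intro φ' h
    cases φ' <;> simp [HFormula.codeWith] at h ⊢
    exact ch_inj_qf _ _ h

theorem re_part : IsRE FinStateSatCodes := by
  refine isRE_of_primrec (β := Th × List SJ × List WJ) (R := fun n y =>
    y.1.ok ∧ (Valid SJust y.1 y.2.1 ∧ (2, n, 0, (0, 1), []) ∈ y.2.1) ∧
      (Valid WJust () y.2.2 ∧ (1, n, []) ∈ y.2.2)) ?_ ?_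
  · have hθ : Primrec fun z : ℕ × Th × List SJ × List WJ => z.2.1 := Primrec.fst.comp Primrec.snd
    have hD : Primrec fun z : ℕ × Th × List SJ × List WJ => z.2.2.1 :=
      Primrec.fst.comp (Primrec.snd.comp Primrec.snd)
    have hD' : Primrec fun z : ℕ × Th × List SJ × List WJ => z.2.2.2 :=
      Primrec.snd.comp (Primrec.snd.comp Primrec.snd)
    have hn : Primrec fun z : ℕ × Th × List SJ × List WJ => z.1 := Primrec.fst
    refine (Th_ok_primrec.comp hθ).and ((((valid_primrec default SJust_primrec).comp
      (hθ.pair hD)).and (ppMem ?_ hD)).and (((valid_primrec default WJust_primrec).comp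
      ((Primrec.const ()).pair hD')).and (ppMem ?_ hD')))
    · exact (Primrec.const 2).pair (hn.pair (Primrec.const (0, (0, 1), [])))
    · exact (Primrec.const 1).pair (hn.pair (Primrec.const []))
  · intro n
    constructor
    · rintro ⟨φ, hs, rfl, hS⟩
      obtain ⟨θ, h1, h2⟩ := (TS_iff_Th φ).1 hS
      obtain ⟨D, hD⟩ := (SJ_iff θ φ).2 h2
      obtain ⟨D', hD'⟩ := (WDer_iff (ch φ)).2 ⟨φ, hs, rfl⟩
      exact ⟨(θ, D, D'), h1, hD, hD'⟩
    · rintro ⟨⟨θ, D, D'⟩, h1, h2, h3⟩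
      obtain ⟨φ, hs, rfl⟩ := (WDer_iff n).1 ⟨D', h3⟩
      exact ⟨φ, hs, rfl, (TS_iff_Th φ).2 ⟨θ, h1, (SJ_iff θ φ).1 ⟨D, h2⟩⟩⟩


/-! ### Horn systems in HyperLTL -/

/-- Constraints between tuples. -/
inductive Con : Type where
  | C : Fin 7 → Fin 5 → ℕ → Con
  | D : Fin 7 → Fin 5 → Fin 7 → Fin 5 → ℕ → Con
  | L : Fin 7 → Fin 5 → Fin 7 → Fin 5 → Con

abbrev Tp : Type := Fin 5 → ℕ

def Con.holds (ν : Fin 7 → Tp) : Con → Prop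
  | .C x i k => ν x i = k
  | .D x i y j k => ν y j = ν x i + k
  | .L x i y j => ν x i < ν y j

/-- Every tuple of `T` is the head of a rule instance with all premises in `T`. -/
def Supp (R : List (List Con)) (T : Set Tp) : Prop :=
  ∀ v ∈ T, ∃ ν : Fin 7 → Tp, ν 0 = v ∧ (∀ x, ν x ∈ T) ∧ ∃ r ∈ R, ∀ c ∈ r, c.holds ν

def qtt : QF ℕ := .disj (.atom 0 0) (.neg (.atom 0 0))
def qand (ψ χ : QF ℕ) : QF ℕ := .neg (.disj (.neg ψ) (.neg χ))
def qev (ψ : QF ℕ) : QF ℕ := .untl qtt ψ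
def qnx : ℕ → QF ℕ → QF ℕ
  | 0, ψ => ψ
  | k + 1, ψ => .next (qnx k ψ)
def qAll : List (QF ℕ) → QF ℕ
  | [] => qtt
  | ψ :: l => qand ψ (qAll l)
def qEx : List (QF ℕ) → QF ℕ
  | [] => .neg qtt
  | ψ :: l => .disj ψ (qEx l)

theorem sat_qtt (As : ℕ → Trace ℕ) : qtt.sat As := em _

theorem sat_qand (ψ χ : QF ℕ) (As : ℕ → Trace ℕ) : (qand ψ χ).sat As ↔ ψ.sat As ∧ χ.sat As := by
  simp only [qand, QF.sat]; tauto

theorem sat_qev (ψ : QF ℕ) (As : ℕ → Trace ℕ) :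
    (qev ψ).sat As ↔ ∃ j, ψ.sat (shiftAsg As j) := by
  simp only [qev, QF.sat]
  exact exists_congr fun j => ⟨fun h => h.1, fun h => ⟨h, fun _ _ => sat_qtt _⟩⟩

theorem shift_shift (As : ℕ → Trace ℕ) (a b : ℕ) :
    shiftAsg (shiftAsg As a) b = shiftAsg As (b + a) := by
  funext x i
  simp only [shiftAsg, Trace.shift]
  rw [Nat.add_assoc]

theorem sat_qnx (k : ℕ) (ψ : QF ℕ) (As : ℕ → Trace ℕ) :
    (qnx k ψ).sat As ↔ ψ.sat (shiftAsg As k) := by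
  induction k generalizing As with
  | zero => exact Iff.rfl
  | succ k ih =>
    simp only [qnx, QF.sat, ih, shift_shift]

theorem sat_qAll (l : List (QF ℕ)) (As : ℕ → Trace ℕ) :
    (qAll l).sat As ↔ ∀ ψ ∈ l, ψ.sat As := by
  induction l with
  | nil => simp [qAll, sat_qtt]
  | cons ψ l ih => simp [qAll, sat_qand, ih]

theorem sat_qEx (l : List (QF ℕ)) (As : ℕ → Trace ℕ) :
    (qEx l).sat As ↔ ∃ ψ ∈ l, ψ.sat As := by
  induction l with
  | nil => simp [qEx, QF.sat, sat_qtt]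
  | cons ψ l ih => simp [qEx, QF.sat, ih]

def Con.fm : Con → QF ℕ
  | .C x i k => qnx (k + 1) (.atom i (x + 1))
  | .D x i y j k => qev (qand (.atom i (x + 1)) (qnx k (.atom j (y + 1))))
  | .L x i y j => qev (qand (.atom i (x + 1)) (qnx 1 (qev (.atom j (y + 1)))))

def wfm (i : Fin 5) : QF ℕ :=
  qand (.neg (.atom i 1)) (qand (qev (.atom i 1))
    (.neg (qev (qand (.atom i 1) (qnx 1 (qev (.atom i 1)))))))

/-- The trace `t` encodes the tuple `v`. -/
def Enc (t : Trace ℕ) (v : Tp) : Prop := ∀ (i : Fin 5) (p : ℕ), (i : ℕ) ∈ t p ↔ p = v i + 1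

theorem sat_wfm (As : ℕ → Trace ℕ) :
    (∀ i, (wfm i).sat As) ↔ ∃ v, Enc (As 1) v := by
  constructor
  · intro h
    have : ∀ i : Fin 5, ∃ v, ∀ p : ℕ, (i : ℕ) ∈ As 1 p ↔ p = v + 1 := by
      intro i
      have hi := h i
      simp only [wfm, sat_qand, QF.sat, sat_qev, sat_qnx, shiftAsg, Trace.shift] at hi
      obtain ⟨h0, ⟨p, hp⟩, h2⟩ := hi
      simp only [Nat.zero_add] at h0 hp h2
      have h2' : ∀ a b, a < b → (i : ℕ) ∈ As 1 a → (i : ℕ) ∈ As 1 b → False := by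
        intro a b hab ha hb
        refine h2 ⟨a, ha, b - a - 1, ?_⟩
        convert hb using 2
        omega
      cases p with
      | zero => exact absurd hp h0
      | succ v =>
        refine ⟨v, fun p => ⟨fun hp' => ?_, fun e => e ▸ hp⟩⟩
        rcases lt_trichotomy p (v + 1) with hlt | he | hgt
        · exact (h2' _ _ hlt hp' hp).elim
        · exact he
        · exact (h2' _ _ hgt hp hp').elim
    choose v hv using this
    exact ⟨v, hv⟩
  · rintro ⟨v, hv⟩ i
    simp only [wfm, sat_qand, QF.sat, sat_qev, sat_qnx, shiftAsg, Trace.shift, hv i]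
    refine ⟨by omega, ⟨v i + 1, by omega⟩, ?_⟩
    rintro ⟨j, h1, k, h2⟩
    omega

theorem sat_fm (As : ℕ → Trace ℕ) (ν : Fin 7 → Tp) (h : ∀ x : Fin 7, Enc (As (x + 1)) (ν x))
    (c : Con) : c.fm.sat As ↔ c.holds ν := by
  cases c with
  | C x i k =>
    simp only [Con.fm, sat_qnx, QF.sat, shiftAsg, Trace.shift, h x i, Con.holds]
    omega
  | D x i y j k =>
    simp only [Con.fm, sat_qnx, sat_qev, sat_qand, QF.sat, shiftAsg, Trace.shift, h x i, h y j,
      Con.holds]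
    constructor
    · rintro ⟨p, h1, h2⟩; omega
    · intro e; exact ⟨ν x i + 1, by omega, by omega⟩
  | L x i y j =>
    simp only [Con.fm, sat_qnx, sat_qev, sat_qand, QF.sat, shiftAsg, Trace.shift, h x i, h y j,
      Con.holds]
    constructor
    · rintro ⟨p, h1, q, h2⟩; omega
    · intro e; exact ⟨ν x i + 1, by omega, ν y j - ν x i - 1, by omega⟩

def body (R : List (List Con)) : QF ℕ :=
  qand (qAll ((List.finRange 5).map wfm)) (qEx (R.map fun r => qAll (r.map Con.fm)))

theorem sat_body (R : List (List Con)) (As : ℕ → Trace ℕ) :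
    (body R).sat As ↔ (∃ v, Enc (As 1) v) ∧ ∃ r ∈ R, ∀ c ∈ r, c.fm.sat As := by
  rw [← sat_wfm]
  simp [body, sat_qand, sat_qAll, sat_qEx]

def qgoal (K n : ℕ) : QF ℕ := qand (qnx (K + 1) (.atom 0 0)) (qnx (n + 1) (.atom 1 0))

theorem sat_qgoal (K n : ℕ) (As : ℕ → Trace ℕ) (v : Tp) (h : Enc (As 0) v) :
    (qgoal K n).sat As ↔ v 0 = K ∧ v 1 = n := by
  have h0 := h 0
  have h1 := h 1
  simp only [Fin.val_zero, Fin.val_one] at h0 h1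
  simp only [qgoal, sat_qand, sat_qnx, QF.sat, shiftAsg, Trace.shift, h0, h1]
  omega

def hform (K n : ℕ) (R : List (List Con)) : HFormula ℕ :=
  .ex 0 (.all 1 (.ex 2 (.ex 3 (.ex 4 (.ex 5 (.ex 6 (.ex 7 (.qf
    (qand (qgoal K n) (body R))))))))))

def asg (t0 : Trace ℕ) (t : Fin 7 → Trace ℕ) : ℕ → Trace ℕ :=
  Function.update (Function.update (Function.update (Function.update (Function.update
    (Function.update (Function.update (Function.update (fun _ _ => ∅) 0 t0) 1 (t 0)) 2 (t 1))
    3 (t 2)) 4 (t 3)) 5 (t 4)) 6 (t 5)) 7 (t 6)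

theorem asg_zero (t0 : Trace ℕ) (t : Fin 7 → Trace ℕ) : asg t0 t 0 = t0 := by
  simp [asg, Function.update]

theorem asg_succ (t0 : Trace ℕ) (t : Fin 7 → Trace ℕ) (x : Fin 7) : asg t0 t (x + 1) = t x := by
  fin_cases x <;> simp [asg, Function.update]

theorem sat_hform (K n : ℕ) (R : List (List Con)) (T : Set (Trace ℕ)) :
    HModels T (hform K n R) ↔ ∃ t0 ∈ T, ∀ t1 ∈ T, ∃ t : Fin 7 → Trace ℕ, t 0 = t1 ∧ (∀ x, t x ∈ T) ∧
      (qgoal K n).sat (asg t0 t) ∧ (body R).sat (asg t0 t) := by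
  simp only [HModels, hform, HFormula.sat]
  refine exists_congr fun t0 => and_congr_right fun h0 => forall_congr' fun t1 =>
    forall_congr' fun h1 => ?_
  constructor
  · rintro ⟨t2, h2, t3, h3, t4, h4, t5, h5, t6, h6, t7, h7, h⟩
    refine ⟨![t1, t2, t3, t4, t5, t6, t7], rfl, ?_, ?_⟩
    · intro x
      fin_cases x <;> assumption
    · exact (sat_qand _ _ _).1 h
  · rintro ⟨t, rfl, h, hs⟩
    exact ⟨t 1, h 1, t 2, h 2, t 3, h 3, t 4, h 4, t 5, h 5, t 6, h 6, (sat_qand _ _ _).2 hs⟩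

theorem hform_sound {K n : ℕ} {R : List (List Con)} {T : Set (Trace ℕ)}
    (h : HModels T (hform K n R)) : ∃ T' : Set Tp, Supp R T' ∧ ∃ v ∈ T', v 0 = K ∧ v 1 = n := by
  obtain ⟨t0, h0, h⟩ := (sat_hform K n R T).1 h
  have henc : ∀ t ∈ T, ∃ v, Enc t v := by
    intro t1 h1
    obtain ⟨t, rfl, -, -, hb⟩ := h t1 h1
    have := ((sat_body _ _).1 hb).1
    have e := asg_succ t0 t 0
    simp only [Fin.val_zero, Nat.zero_add] at e
    rwa [e] at this
  refine ⟨{v | ∃ t ∈ T, Enc t v}, ?_, ?_⟩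
  · rintro v ⟨t1, h1, hv⟩
    obtain ⟨t, rfl, ht, -, hb⟩ := h t1 h1
    choose ν hν using fun x => henc (t x) (ht x)
    have hν0 : ν 0 = v := by
      funext i
      have a := (hν 0 i (ν 0 i + 1)).2 rfl
      have b := (hv i _).1 a
      omega
    refine ⟨ν, hν0, fun x => ⟨t x, ht x, hν x⟩, ?_⟩
    obtain ⟨r, hr, hc⟩ := ((sat_body _ _).1 hb).2
    exact ⟨r, hr, fun c hc' => (sat_fm _ ν (fun x => by rw [asg_succ]; exact hν x) c).1 (hc c hc')⟩
  · obtain ⟨v, hv⟩ := henc t0 h0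
    obtain ⟨t, -, -, hg, -⟩ := h t0 h0
    exact ⟨v, ⟨t0, h0, hv⟩, (sat_qgoal K n _ v (by rw [asg_zero]; exact hv)).1 hg⟩

theorem hform_complete {K n : ℕ} {R : List (List Con)} {T' : Set Tp} (hfin : T'.Finite)
    (hs : Supp R T') {v0 : Tp} (hv0 : v0 ∈ T') (hK : v0 0 = K) (hn : v0 1 = n) :
    ∃ S : TS ℕ, Finite S.V ∧ HModels S.traces (hform K n R) := by
  obtain ⟨B, hB⟩ : ∃ B, ∀ v ∈ T', ∀ i, v i < B := by
    obtain ⟨b, hb⟩ := hfin.bddAbove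
    refine ⟨(Finset.univ.sup b) + 1, fun v hv i => ?_⟩
    have h1 : v i ≤ b i := hb hv i
    have h2 : b i ≤ Finset.univ.sup b := Finset.le_sup (Finset.mem_univ i)
    omega
  have : Finite T' := hfin
  let S : TS ℕ :=
    { V := T' × Fin (B + 2)
      E := fun a b => (b.2 : ℕ) = min ((a.2 : ℕ) + 1) (B + 1) ∧ (a.2 ≠ 0 → b.1 = a.1)
      vI := (⟨v0, hv0⟩, 0)
      lab := fun a => {j | ∃ i : Fin 5, (i : ℕ) = j ∧ (a.2 : ℕ) = a.1.1 i + 1}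
      succ := fun a => ⟨(a.1, ⟨min ((a.2 : ℕ) + 1) (B + 1), by omega⟩), rfl, fun _ => rfl⟩ }
  have e1 : ∀ t ∈ S.traces, ∃ v ∈ T', Enc t v := by
    rintro t ⟨ρ, hρ, h0, rfl⟩
    have hpos : ∀ i, ((ρ i).2 : ℕ) = min i (B + 1) := by
      intro i
      induction i with
      | zero => rw [h0]; simp [S]
      | succ i ih => rw [(hρ i).1, ih]; omega
    have hst : ∀ i, (ρ (i + 1)).1 = (ρ 1).1 := by
      intro i
      induction i with
      | zero => rfl
      | succ i ih =>
        rw [← ih]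
        refine (hρ (i + 1)).2 ?_
        intro h
        have := hpos (i + 1)
        rw [h] at this
        simp at this
    refine ⟨(ρ 1).1.1, (ρ 1).1.2, ?_⟩
    intro i p
    have key : ((i : ℕ) ∈ S.lab (ρ p)) ↔ ((ρ p).2 : ℕ) = (ρ p).1.1 i + 1 := by
      constructor
      · rintro ⟨i', hi, h⟩
        rwa [Fin.ext hi] at h
      · intro h; exact ⟨i, rfl, h⟩
    rw [key, hpos]
    cases p with
    | zero => omega
    | succ p =>
      rw [hst]
      have := hB _ (ρ 1).1.2 i
      omega
  have e2 : ∀ v ∈ T', ∃ t ∈ S.traces, Enc t v := by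
    intro v hv
    let ρ : ℕ → S.V := fun i =>
      if i = 0 then (⟨v0, hv0⟩, 0) else (⟨v, hv⟩, ⟨min i (B + 1), by omega⟩)
    refine ⟨_, ⟨ρ, ?_, rfl, rfl⟩, ?_⟩
    · intro i
      cases i with
      | zero => simp [ρ, S]
      | succ i =>
        simp only [ρ, S, if_neg (Nat.succ_ne_zero _)]
        exact ⟨by omega, fun _ => trivial⟩
    · intro i p
      cases p with
      | zero =>
        constructor
        · rintro ⟨i', hi, h⟩
          simp [ρ] at h
        · intro h; omega
      | succ p =>
        have hb := hB v hv i
        constructor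
        · rintro ⟨i', hi, h⟩
          rw [Fin.ext hi] at h
          simp only [ρ, if_neg (Nat.succ_ne_zero _)] at h
          omega
        · intro h
          refine ⟨i, rfl, ?_⟩
          simp only [ρ, if_neg (Nat.succ_ne_zero _)]
          omega
  refine ⟨S, inferInstanceAs (Finite (T' × Fin (B + 2))), (sat_hform K n R _).2 ?_⟩
  obtain ⟨t0, ht0, he0⟩ := e2 v0 hv0
  refine ⟨t0, ht0, fun t1 ht1 => ?_⟩
  obtain ⟨v, hv, he⟩ := e1 t1 ht1
  obtain ⟨ν, hν0, hνT, r, hr, hc⟩ := hs v hv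
  choose t htT hte using fun x => e2 (ν x) (hνT x)
  have hte' : ∀ x, Enc (Function.update t 0 t1 x) (ν x) := by
    intro x
    by_cases hx : x = 0
    · subst hx; simpa [hν0] using he
    · simpa [hx] using hte x
  refine ⟨Function.update t 0 t1, by simp, ?_, ?_, ?_⟩
  · intro x
    by_cases hx : x = 0
    · subst hx; simpa using ht1
    · simpa [hx] using htT x
  · exact (sat_qgoal K n _ v0 (by rw [asg_zero]; exact he0)).2 ⟨hK, hn⟩
  · refine (sat_body _ _).2 ⟨⟨v, ?_⟩, r, hr, fun c hcr => ?_⟩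
    · have e := asg_succ t0 (Function.update t 0 t1) 0
      simp only [Fin.val_zero, Nat.zero_add] at e
      rw [e]
      simpa using he
    · exact (sat_fm _ ν (fun x => by rw [asg_succ]; exact hte' x) c).2 (hc c hcr)


/-! ### Horn rules for partial recursive codes -/

open Nat.Partrec (Code)

/-- Tag of the evaluation facts of a code. -/
def tg (c : Code) : ℕ := Encodable.encode c + 1

theorem tg_inj {c c' : Code} (h : tg c = tg c') : c = c' :=
  Encodable.encode_injective (Nat.succ.inj h)

def Pr (x : Fin 7) : List Con := [.C x 0 0, .L x 4 0 4]
def Ev (c : Code) (x : Fin 7) : List Con := [.C x 0 (tg c), .L x 4 0 4]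

def baseRules : List (List Con) :=
  [ [.C 0 0 0, .C 0 1 0, .C 0 2 0, .C 0 3 0],
    Pr 1 ++ [.C 0 0 0, .D 1 3 0 3 1, .D 1 1 0 1 1, .D 1 2 0 2 0, .L 0 1 0 2],
    Pr 1 ++ [.C 0 0 0, .D 1 3 0 3 1, .D 1 1 1 2 1, .D 1 2 0 1 0, .C 0 2 0],
    Pr 1 ++ [.C 0 0 0, .D 1 3 0 3 1, .L 1 2 1 1, .D 1 1 0 1 0, .D 1 2 0 2 1],
    Pr 1 ++ [.C 0 0 0, .D 1 3 0 3 1, .D 1 1 1 2 0, .C 0 1 0, .D 1 1 0 2 1] ]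

def rPair (f g : Code) : List Con :=
  .C 0 0 (tg (.pair f g)) :: (Ev f 1 ++ Ev g 2 ++ Pr 3 ++
    [.D 0 1 1 1 0, .D 0 1 2 1 0, .D 1 2 3 1 0, .D 2 2 3 2 0, .D 3 3 0 2 0])
def rComp (f g : Code) : List Con :=
  .C 0 0 (tg (.comp f g)) :: (Ev g 1 ++ Ev f 2 ++
    [.D 0 1 1 1 0, .D 1 2 2 1 0, .D 2 2 0 2 0])
def rPrecZ (f g : Code) : List Con :=
  .C 0 0 (tg (.prec f g)) :: (Pr 1 ++ Ev f 2 ++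
    [.C 1 2 0, .D 1 3 0 1 0, .D 1 1 2 1 0, .D 2 2 0 2 0])
def rPrecS (f g : Code) : List Con :=
  .C 0 0 (tg (.prec f g)) :: (Pr 1 ++ Pr 2 ++ Ev (.prec f g) 3 ++ Pr 4 ++ Pr 5 ++ Ev g 6 ++
    [.D 1 3 0 1 0, .D 1 1 2 1 0, .D 2 2 1 2 1, .D 2 3 3 1 0, .D 2 2 4 1 0, .D 3 2 4 2 0,
      .D 1 1 5 1 0, .D 4 3 5 2 0, .D 5 3 6 1 0, .D 6 2 0 2 0])
def rFindZ (f : Code) : List Con :=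
  .C 0 0 (tg (.rfind' f)) :: (Pr 1 ++ Ev f 2 ++
    [.D 1 3 0 1 0, .D 0 1 2 1 0, .C 2 2 0, .D 1 2 0 2 0])
def rFindS (f : Code) : List Con :=
  .C 0 0 (tg (.rfind' f)) :: (Pr 1 ++ Ev f 2 ++ Pr 3 ++ Ev (.rfind' f) 4 ++
    [.D 1 3 0 1 0, .D 0 1 2 1 0, .L 1 0 2 2, .D 1 1 3 1 0, .D 1 2 3 2 1, .D 3 3 4 1 0,
      .D 4 2 0 2 0])

def crules : Code → List (List Con)
  | .zero => [[.C 0 0 (tg .zero), .C 0 2 0]]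
  | .succ => [[.C 0 0 (tg .succ), .D 0 1 0 2 1]]
  | .left => [.C 0 0 (tg .left) :: (Pr 1 ++ [.D 1 3 0 1 0, .D 1 1 0 2 0])]
  | .right => [.C 0 0 (tg .right) :: (Pr 1 ++ [.D 1 3 0 1 0, .D 1 2 0 2 0])]
  | .pair f g => crules f ++ crules g ++ [rPair f g]
  | .comp f g => crules f ++ crules g ++ [rComp f g]
  | .prec f g => crules f ++ crules g ++ [rPrecZ f g, rPrecS f g]
  | .rfind' f => crules f ++ [rFindZ f, rFindS f]

/-! #### Evaluation facts -/

theorem ev_left (a b : ℕ) : a ∈ Code.eval .left (Nat.pair a b) := by simp [Code.eval]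
theorem ev_right (a b : ℕ) : b ∈ Code.eval .right (Nat.pair a b) := by simp [Code.eval]

theorem ev_pair (f g : Code) (a b : ℕ) :
    b ∈ Code.eval (.pair f g) a ↔ ∃ u ∈ f.eval a, ∃ v ∈ g.eval a, Nat.pair u v = b := by
  simp [Code.eval, Seq.seq]

theorem ev_comp (f g : Code) (a b : ℕ) :
    b ∈ Code.eval (.comp f g) a ↔ ∃ z ∈ g.eval a, b ∈ f.eval z := by
  simp only [Code.eval]
  exact Part.mem_bind_iff

theorem ev_precS (f g : Code) (a n b : ℕ) :
    b ∈ Code.eval (.prec f g) (Nat.pair a (n + 1)) ↔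
      ∃ z ∈ Code.eval (.prec f g) (Nat.pair a n), b ∈ g.eval (Nat.pair a (Nat.pair n z)) := by
  rw [← Nat.succ_eq_add_one, Code.eval_prec_succ]
  simp

theorem ev_rfind (f : Code) (a m b : ℕ) :
    b ∈ Code.eval (.rfind' f) (Nat.pair a m) ↔ ∃ n, n + m = b ∧ 0 ∈ f.eval (Nat.pair a (n + m)) ∧
      ∀ i < n, ∃ k ∈ f.eval (Nat.pair a (i + m)), 0 < k := by
  simp only [Code.eval, Nat.unpaired, Nat.unpair_pair, Part.mem_map_iff]
  refine exists_congr fun n => ?_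
  rw [and_comm]
  refine and_congr_right fun _ => Iff.trans Nat.mem_rfind (and_congr ?_ ?_)
  · simp
  · simp [Nat.pos_iff_ne_zero]

/-! #### Soundness -/

def GoodF (v : Tp) : Prop :=
  (v 0 = 0 → Nat.pair (v 1) (v 2) = v 3) ∧ ∀ c, v 0 = tg c → v 2 ∈ Code.eval c (v 1)

theorem good_ev {v : Tp} {c : Code} (h : v 0 = tg c) (h2 : v 2 ∈ Code.eval c (v 1)) : GoodF v := by
  refine ⟨fun h0 => ?_, fun c' h' => ?_⟩
  · rw [h0, tg] at h; omega
  · rw [h] at h'; rw [← tg_inj h']; exact h2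

theorem good_pr {v : Tp} (h : v 0 = 0) (h2 : Nat.pair (v 1) (v 2) = v 3) : GoodF v := by
  refine ⟨fun _ => h2, fun c' h' => ?_⟩
  rw [h, tg] at h'; omega

theorem base_sound {r : List Con} (hr : r ∈ baseRules) {ν : Fin 7 → Tp}
    (h : ∀ c ∈ r, c.holds ν) (ih : ∀ x, ν x 4 < ν 0 4 → GoodF (ν x)) : GoodF (ν 0) := by
  simp only [baseRules, List.mem_cons, List.not_mem_nil, or_false] at hr
  rcases hr with rfl | rfl | rfl | rfl | rfl <;>
    simp [Pr, Con.holds] at h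
  · obtain ⟨h0, h1, h2, h3⟩ := h
    exact good_pr h0 (by rw [h1, h2, h3]; rfl)
  all_goals
    obtain ⟨p0, p4, h0, h3, h1, h2, h5⟩ := h
    have hp := (ih 1 p4).1 p0
    refine good_pr h0 ?_
    rw [h3, ← hp]
    unfold Nat.pair
    split_ifs <;> try omega
  · grind
  · grind
  · grind
  · grind

theorem crules_sound (c0 : Code) {r : List Con} (hr : r ∈ crules c0) {ν : Fin 7 → Tp}
    (h : ∀ c ∈ r, c.holds ν) (ih : ∀ x, ν x 4 < ν 0 4 → GoodF (ν x)) : GoodF (ν 0) := by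
  induction c0 with
  | zero =>
    simp [crules] at hr; subst hr; simp [Con.holds] at h
    exact good_ev h.1 (by rw [h.2]; simp [Code.eval, pure, PFun.pure])
  | succ =>
    simp [crules] at hr; subst hr; simp [Con.holds] at h
    exact good_ev h.1 (by rw [h.2]; simp [Code.eval])
  | left =>
    simp [crules] at hr; subst hr; simp [Con.holds, Pr] at h
    obtain ⟨h0, p0, p4, h1, h2⟩ := h
    have hp := (ih 1 p4).1 p0
    exact good_ev h0 (by rw [h1, h2, ← hp]; exact ev_left _ _)
  | right =>
    simp [crules] at hr; subst hr; simp [Con.holds, Pr] at h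
    obtain ⟨h0, p0, p4, h1, h2⟩ := h
    have hp := (ih 1 p4).1 p0
    exact good_ev h0 (by rw [h1, h2, ← hp]; exact ev_right _ _)
  | pair f g ihf ihg =>
    simp only [crules, List.mem_append, List.mem_singleton] at hr
    rcases hr with (hr | hr) | rfl
    · exact ihf hr
    · exact ihg hr
    simp [Con.holds, Pr, Ev, rPair] at h
    obtain ⟨h0, a0, a4, b0, b4, c0, c4, h1, h2, h3, h4, h5⟩ := h
    have ha := (ih 1 a4).2 _ a0
    have hb := (ih 2 b4).2 _ b0
    have hc := (ih 3 c4).1 c0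
    rw [h1] at ha
    rw [h2] at hb
    rw [h3, h4] at hc
    exact good_ev h0 ((ev_pair _ _ _ _).2 ⟨_, ha, _, hb, by rw [hc, h5]⟩)
  | comp f g ihf ihg =>
    simp only [crules, List.mem_append, List.mem_singleton] at hr
    rcases hr with (hr | hr) | rfl
    · exact ihf hr
    · exact ihg hr
    simp [Con.holds, Ev, rComp] at h
    obtain ⟨h0, a0, a4, b0, b4, h1, h2, h3⟩ := h
    have ha := (ih 1 a4).2 _ a0
    have hb := (ih 2 b4).2 _ b0
    rw [h1] at ha
    rw [h2, ← h3] at hb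
    exact good_ev h0 ((ev_comp _ _ _ _).2 ⟨_, ha, hb⟩)
  | prec f g ihf ihg =>
    simp only [crules, List.mem_append, List.mem_cons, List.not_mem_nil, or_false] at hr
    rcases hr with (hr | hr) | rfl | rfl
    · exact ihf hr
    · exact ihg hr
    · simp [Con.holds, Ev, Pr, rPrecZ] at h
      obtain ⟨h0, a0, a4, b0, b4, h1, h2, h3, h4⟩ := h
      have ha := (ih 1 a4).1 a0
      have hb := (ih 2 b4).2 _ b0
      rw [h1] at ha
      rw [h3, ← h4] at hb
      refine good_ev h0 ?_
      rw [h2, ← ha, Code.eval_prec_zero]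
      exact hb
    · simp [Con.holds, Ev, Pr, rPrecS] at h
      obtain ⟨h0, a0, a4, b0, b4, c0, c4, d0, d4, e0, e4, f0, f4,
        h1, h2, h3, h5, h6, h7, h8, h9, h10, h11⟩ := h
      have ha := (ih 1 a4).1 a0
      have hb := (ih 2 b4).1 b0
      have hc := (ih 3 c4).2 _ c0
      have hd := (ih 4 d4).1 d0
      have he := (ih 5 e4).1 e0
      have hf := (ih 6 f4).2 _ f0
      rw [h2] at hb
      rw [h5, ← hb] at hc
      rw [h6, h7] at hd
      rw [h8, h9, ← hd] at he
      rw [h10, ← he, ← h11] at hf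
      refine good_ev h0 ?_
      rw [h1, ← ha, h3]
      exact (ev_precS _ _ _ _ _).2 ⟨_, hc, hf⟩
  | rfind' f ihf =>
    simp only [crules, List.mem_append, List.mem_cons, List.not_mem_nil, or_false] at hr
    rcases hr with hr | rfl | rfl
    · exact ihf hr
    · simp [Con.holds, Ev, Pr, rFindZ] at h
      obtain ⟨h0, a0, a4, b0, b4, h1, h2, h3, h4⟩ := h
      have ha := (ih 1 a4).1 a0
      have hb := (ih 2 b4).2 _ b0
      rw [h2, h3, h1, ← ha] at hb
      refine good_ev h0 ?_
      rw [h1, ← ha, h4]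
      exact (ev_rfind _ _ _ _).2 ⟨0, by simp, by simpa using hb, by simp⟩
    · simp [Con.holds, Ev, Pr, rFindS] at h
      obtain ⟨h0, a0, a4, b0, b4, c0, c4, d0, d4, h1, h2, h3, h5, h6, h7, h8⟩ := h
      have ha := (ih 1 a4).1 a0
      have hb := (ih 2 b4).2 _ b0
      have hc := (ih 3 c4).1 c0
      have hd := (ih 4 d4).2 _ d0
      rw [h2, h1, ← ha] at hb
      rw [h5, h6] at hc
      rw [h7, ← hc, ← h8] at hd
      refine good_ev h0 ?_
      rw [h1, ← ha]
      obtain ⟨n, hn, hz, hk⟩ := (ev_rfind _ _ _ _).1 hd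
      refine (ev_rfind _ _ _ _).2 ⟨n + 1, by omega, ?_, ?_⟩
      · rw [show n + 1 + ν 1 2 = n + (ν 1 2 + 1) by omega]; exact hz
      · intro i hi
        cases i with
        | zero => exact ⟨_, by simpa using hb, by omega⟩
        | succ i =>
          rw [show i + 1 + ν 1 2 = i + (ν 1 2 + 1) by omega]; exact hk i (by omega)

theorem supp_sound {c0 : Code} {T : Set Tp} (h : Supp (baseRules ++ crules c0) T) :
    ∀ v ∈ T, GoodF v := by
  suffices H : ∀ n, ∀ v ∈ T, v 4 = n → GoodF v from fun v hv => H _ v hv rfl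
  intro n
  induction n using Nat.strong_induction_on with
  | _ n ih =>
    rintro v hv rfl
    obtain ⟨ν, rfl, hT, r, hr, hc⟩ := h v hv
    have ih' : ∀ x, ν x 4 < ν 0 4 → GoodF (ν x) := fun x hx => ih _ hx _ (hT x) rfl
    rcases List.mem_append.1 hr with hr | hr
    · exact base_sound hr hc ih'
    · exact crules_sound c0 hr hc ih'


def Dr (R : List (List Con)) (v : Tp) : Prop := ∃ T : Set Tp, T.Finite ∧ Supp R T ∧ v ∈ T

theorem Dr_step {R : List (List Con)} {r : List Con} (hr : r ∈ R) (ν : Fin 7 → Tp)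
    (hc : ∀ c ∈ r, c.holds ν) (hp : ∀ x, Dr R (ν x) ∨ ν x = ν 0) : Dr R (ν 0) := by
  have : ∀ x, ∃ T : Set Tp, T.Finite ∧ Supp R T ∧ (ν x ∈ T ∨ ν x = ν 0) := by
    intro x
    rcases hp x with ⟨T, h1, h2, h3⟩ | h
    · exact ⟨T, h1, h2, Or.inl h3⟩
    · exact ⟨∅, Set.finite_empty, fun v hv => hv.elim, Or.inr h⟩
  choose T h1 h2 h3 using this
  refine ⟨insert (ν 0) (⋃ x, T x), (Set.finite_iUnion h1).insert _, ?_, Set.mem_insert _ _⟩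
  rintro v (rfl | hv)
  · refine ⟨ν, rfl, fun x => ?_, r, hr, hc⟩
    rcases h3 x with h | h
    · exact Or.inr (Set.mem_iUnion.2 ⟨x, h⟩)
    · exact Or.inl h
  · obtain ⟨x, hx⟩ := Set.mem_iUnion.1 hv
    obtain ⟨ν', e, hT, hh⟩ := h2 x v hx
    exact ⟨ν', e, fun y => Or.inr (Set.mem_iUnion.2 ⟨x, hT y⟩), hh⟩

theorem Dr_step' {R : List (List Con)} {r : List Con} (hr : r ∈ R) (v v1 v2 v3 v4 v5 v6 : Tp)
    (hc : ∀ c ∈ r, c.holds ![v, v1, v2, v3, v4, v5, v6])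
    (p1 : Dr R v1 ∨ v1 = v) (p2 : Dr R v2 ∨ v2 = v) (p3 : Dr R v3 ∨ v3 = v)
    (p4 : Dr R v4 ∨ v4 = v) (p5 : Dr R v5 ∨ v5 = v) (p6 : Dr R v6 ∨ v6 = v) : Dr R v := by
  refine Dr_step hr ![v, v1, v2, v3, v4, v5, v6] hc ?_
  intro x
  fin_cases x
  · exact Or.inr rfl
  all_goals assumption

theorem pair_complete {R : List (List Con)} (hR : ∀ r ∈ baseRules, r ∈ R) :
    ∀ k a b : ℕ, Nat.pair a b = k → ∃ ρ, Dr R ![0, a, b, k, ρ] := by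
  intro k
  induction k with
  | zero =>
    intro a b h
    have h' : Nat.pair a b = Nat.pair 0 0 := h
    obtain ⟨rfl, rfl⟩ := Nat.pair_eq_pair.1 h'
    refine ⟨0, Dr_step' (hR _ (List.mem_cons_self)) _ _ _ _ _ _ _ ?_ (Or.inr rfl) (Or.inr rfl)
      (Or.inr rfl) (Or.inr rfl) (Or.inr rfl) (Or.inr rfl)⟩
    simp [Con.holds]
  | succ k ih =>
    intro a b h
    obtain ⟨a', b', h'⟩ : ∃ a' b', Nat.pair a' b' = k := ⟨_, _, Nat.pair_unpair k⟩
    obtain ⟨ρ, hρ⟩ := ih a' b' h'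
    have key : ∀ a'' b'', (∃ r ∈ baseRules, ∀ c ∈ r, c.holds
        ![![0, a'', b'', k + 1, ρ + 1], ![0, a', b', k, ρ], ![0, a'', b'', k + 1, ρ + 1],
          ![0, a'', b'', k + 1, ρ + 1], ![0, a'', b'', k + 1, ρ + 1],
          ![0, a'', b'', k + 1, ρ + 1], ![0, a'', b'', k + 1, ρ + 1]]) →
        Nat.pair a'' b'' = k + 1 → ∃ ρ, Dr R ![0, a, b, k + 1, ρ] := by
      rintro a'' b'' ⟨r, hr, hc⟩ e
      rw [← h] at e
      obtain ⟨rfl, rfl⟩ := Nat.pair_eq_pair.1 e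
      exact ⟨ρ + 1, Dr_step' (hR r hr) _ _ _ _ _ _ _ hc (Or.inl hρ) (Or.inr rfl)
        (Or.inr rfl) (Or.inr rfl) (Or.inr rfl) (Or.inr rfl)⟩
    have fin : ∀ a'' b'', (∃ r ∈ baseRules, ∀ c ∈ r, c.holds
        ![![0, a'', b'', k + 1, ρ + 1], ![0, a', b', k, ρ], ![0, a'', b'', k + 1, ρ + 1],
          ![0, a'', b'', k + 1, ρ + 1], ![0, a'', b'', k + 1, ρ + 1],
          ![0, a'', b'', k + 1, ρ + 1], ![0, a'', b'', k + 1, ρ + 1]]) →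
        ∃ ρ, Dr R ![0, a, b, k + 1, ρ] := by
      intro a'' b'' hr
      refine key a'' b'' hr ?_
      obtain ⟨r, hr, hc⟩ := hr
      exact (base_sound hr hc (fun x => by
        fin_cases x <;> simp
        exact good_pr rfl h')).1 rfl
    by_cases c1 : a' < b'
    · by_cases c2 : a' + 1 < b'
      · exact fin (a' + 1) b' ⟨_, List.mem_cons_of_mem _ List.mem_cons_self,
          by simp [Pr, Con.holds]; omega⟩
      · exact fin b' 0 ⟨_, List.mem_cons_of_mem _ (List.mem_cons_of_mem _ List.mem_cons_self),
          by simp [Pr, Con.holds]; omega⟩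
    · by_cases c2 : b' < a'
      · exact fin a' (b' + 1) ⟨_, List.mem_cons_of_mem _ (List.mem_cons_of_mem _
          (List.mem_cons_of_mem _ List.mem_cons_self)), by simp [Pr, Con.holds]; omega⟩
      · exact fin 0 (a' + 1) ⟨_, List.mem_cons_of_mem _ (List.mem_cons_of_mem _
          (List.mem_cons_of_mem _ (List.mem_cons_of_mem _ List.mem_cons_self))),
          by simp [Pr, Con.holds]; omega⟩

theorem code_complete {R : List (List Con)} (hR : ∀ r ∈ baseRules, r ∈ R) (c : Code)
    (hc : ∀ r ∈ crules c, r ∈ R) :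
    ∀ a b : ℕ, b ∈ c.eval a → ∃ ρ, Dr R ![tg c, a, b, 0, ρ] := by
  have hP : ∀ a b : ℕ, ∃ ρ, Dr R ![0, a, b, Nat.pair a b, ρ] :=
    fun a b => pair_complete hR _ a b rfl
  induction c with
  | zero =>
    intro a b h
    have : b = 0 := by simpa [Code.eval, pure, PFun.pure] using h
    subst this
    refine ⟨0, Dr_step' (hc _ (by rw [crules]; exact List.mem_cons_self)) _ _ _ _ _ _ _ ?_
      (Or.inr rfl) (Or.inr rfl) (Or.inr rfl) (Or.inr rfl) (Or.inr rfl) (Or.inr rfl)⟩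
    simp [Con.holds]
  | succ =>
    intro a b h
    have : b = a + 1 := by simpa [Code.eval] using h
    subst this
    refine ⟨0, Dr_step' (hc _ (by rw [crules]; exact List.mem_cons_self)) _ _ _ _ _ _ _ ?_
      (Or.inr rfl) (Or.inr rfl) (Or.inr rfl) (Or.inr rfl) (Or.inr rfl) (Or.inr rfl)⟩
    simp [Con.holds]
  | left =>
    intro a b h
    obtain ⟨a', b', rfl⟩ : ∃ a' b', Nat.pair a' b' = a := ⟨_, _, Nat.pair_unpair a⟩
    have : b = a' := Part.mem_unique h (ev_left _ _)
    subst this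
    obtain ⟨ρ, hρ⟩ := hP b b'
    refine ⟨ρ + 1, Dr_step' (hc _ (by rw [crules]; exact List.mem_cons_self)) _ _ _ _ _ _ _ ?_
      (Or.inl hρ) (Or.inr rfl) (Or.inr rfl) (Or.inr rfl) (Or.inr rfl) (Or.inr rfl)⟩
    simp [Con.holds, Pr]
  | right =>
    intro a b h
    obtain ⟨a', b', rfl⟩ : ∃ a' b', Nat.pair a' b' = a := ⟨_, _, Nat.pair_unpair a⟩
    have : b = b' := Part.mem_unique h (ev_right _ _)
    subst this
    obtain ⟨ρ, hρ⟩ := hP a' b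
    refine ⟨ρ + 1, Dr_step' (hc _ (by rw [crules]; exact List.mem_cons_self)) _ _ _ _ _ _ _ ?_
      (Or.inl hρ) (Or.inr rfl) (Or.inr rfl) (Or.inr rfl) (Or.inr rfl) (Or.inr rfl)⟩
    simp [Con.holds, Pr]
  | pair f g ihf ihg =>
    intro a b h
    simp only [crules, List.mem_append, List.mem_singleton] at hc
    obtain ⟨u, hu, v, hv, rfl⟩ := (ev_pair _ _ _ _).1 h
    obtain ⟨ρ1, h1⟩ := ihf (fun r hr => hc r (Or.inl (Or.inl hr))) a u hu
    obtain ⟨ρ2, h2⟩ := ihg (fun r hr => hc r (Or.inl (Or.inr hr))) a v hv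
    obtain ⟨ρ3, h3⟩ := hP u v
    refine ⟨ρ1 + ρ2 + ρ3 + 1, Dr_step' (hc _ (Or.inr rfl)) _ _ _ _ _ _ _ ?_
      (Or.inl h1) (Or.inl h2) (Or.inl h3) (Or.inr rfl) (Or.inr rfl) (Or.inr rfl)⟩
    simp [Con.holds, Pr, Ev, rPair]
    omega
  | comp f g ihf ihg =>
    intro a b h
    simp only [crules, List.mem_append, List.mem_singleton] at hc
    obtain ⟨z, hz, hb⟩ := (ev_comp _ _ _ _).1 h
    obtain ⟨ρ1, h1⟩ := ihg (fun r hr => hc r (Or.inl (Or.inr hr))) a z hz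
    obtain ⟨ρ2, h2⟩ := ihf (fun r hr => hc r (Or.inl (Or.inl hr))) z b hb
    refine ⟨ρ1 + ρ2 + 1, Dr_step' (hc _ (Or.inr rfl)) _ _ _ _ _ _ _ ?_
      (Or.inl h1) (Or.inl h2) (Or.inr rfl) (Or.inr rfl) (Or.inr rfl) (Or.inr rfl)⟩
    simp [Con.holds, Ev, rComp]
  | prec f g ihf ihg =>
    intro a b h
    simp only [crules, List.mem_append, List.mem_cons, List.not_mem_nil, or_false] at hc
    obtain ⟨α, n, rfl⟩ : ∃ a' b', Nat.pair a' b' = a := ⟨_, _, Nat.pair_unpair a⟩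
    induction n generalizing b with
    | zero =>
      rw [Code.eval_prec_zero] at h
      obtain ⟨ρ1, h1⟩ := hP α 0
      obtain ⟨ρ2, h2⟩ := ihf (fun r hr => hc r (Or.inl (Or.inl hr))) α b h
      refine ⟨ρ1 + ρ2 + 1, Dr_step' (hc _ (Or.inr (Or.inl rfl))) _ _ _ _ _ _ _ ?_
        (Or.inl h1) (Or.inl h2) (Or.inr rfl) (Or.inr rfl) (Or.inr rfl) (Or.inr rfl)⟩
      simp [Con.holds, Ev, Pr, rPrecZ]
    | succ n ih =>
      obtain ⟨z, hz, hb⟩ := (ev_precS _ _ _ _ _).1 h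
      obtain ⟨ρ1, h1⟩ := hP α (n + 1)
      obtain ⟨ρ2, h2⟩ := hP α n
      obtain ⟨ρ3, h3⟩ := ih z hz
      obtain ⟨ρ4, h4⟩ := hP n z
      obtain ⟨ρ5, h5⟩ := hP α (Nat.pair n z)
      obtain ⟨ρ6, h6⟩ := ihg (fun r hr => hc r (Or.inl (Or.inr hr))) _ b hb
      refine ⟨ρ1 + ρ2 + ρ3 + ρ4 + ρ5 + ρ6 + 1, Dr_step' (hc _ (Or.inr (Or.inr rfl)))
        _ _ _ _ _ _ _ ?_ (Or.inl h1) (Or.inl h2) (Or.inl h3) (Or.inl h4) (Or.inl h5) (Or.inl h6)⟩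
      simp [Con.holds, Ev, Pr, rPrecS]
      omega
  | rfind' f ihf =>
    intro a b h
    simp only [crules, List.mem_append, List.mem_cons, List.not_mem_nil, or_false] at hc
    obtain ⟨α, m, rfl⟩ : ∃ a' b', Nat.pair a' b' = a := ⟨_, _, Nat.pair_unpair a⟩
    obtain ⟨n, hn, hz, hk⟩ := (ev_rfind _ _ _ _).1 h
    clear h
    induction n generalizing m with
    | zero =>
      simp only [Nat.zero_add] at hn hz
      subst hn
      obtain ⟨ρ1, h1⟩ := hP α m
      obtain ⟨ρ2, h2⟩ := ihf (fun r hr => hc r (Or.inl hr)) _ _ hz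
      refine ⟨ρ1 + ρ2 + 1, Dr_step' (hc _ (Or.inr (Or.inl rfl))) _ _ _ _ _ _ _ ?_
        (Or.inl h1) (Or.inl h2) (Or.inr rfl) (Or.inr rfl) (Or.inr rfl) (Or.inr rfl)⟩
      simp [Con.holds, Ev, Pr, rFindZ]
    | succ n ih =>
      obtain ⟨k, hk0, hk1⟩ := hk 0 (by omega)
      rw [Nat.zero_add] at hk0
      obtain ⟨ρ1, h1⟩ := hP α m
      obtain ⟨ρ2, h2⟩ := ihf (fun r hr => hc r (Or.inl hr)) _ _ hk0
      obtain ⟨ρ3, h3⟩ := hP α (m + 1)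
      obtain ⟨ρ4, h4⟩ := ih (m + 1) (by omega) (by
          rw [show n + (m + 1) = n + 1 + m by omega]; exact hz) (fun i hi => by
          rw [show i + (m + 1) = i + 1 + m by omega]; exact hk (i + 1) (by omega))
      refine ⟨ρ1 + ρ2 + ρ3 + ρ4 + 1, Dr_step' (hc _ (Or.inr (Or.inr rfl))) _ _ _ _ _ _ _ ?_
        (Or.inl h1) (Or.inl h2) (Or.inl h3) (Or.inl h4) (Or.inr rfl) (Or.inr rfl)⟩
      simp [Con.holds, Ev, Pr, rFindS]
      omega

/-! #### The reduction -/

def Sm (ψ : QF ℕ) : Prop := ∀ x ∈ ψ.freeVars, x < 8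

theorem Sm_atom (a : ℕ) {x : ℕ} (h : x < 8) : Sm (.atom a x) := by
  rintro y rfl; exact h
theorem Sm_neg {ψ : QF ℕ} (h : Sm ψ) : Sm (.neg ψ) := h
theorem Sm_disj {ψ χ : QF ℕ} (h : Sm ψ) (h' : Sm χ) : Sm (.disj ψ χ) := by
  rintro x (hx | hx)
  exacts [h x hx, h' x hx]
theorem Sm_untl {ψ χ : QF ℕ} (h : Sm ψ) (h' : Sm χ) : Sm (.untl ψ χ) := by
  rintro x (hx | hx)
  exacts [h x hx, h' x hx]
theorem Sm_qtt : Sm qtt := Sm_disj (Sm_atom _ (by omega)) (Sm_neg (Sm_atom _ (by omega)))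
theorem Sm_qand {ψ χ : QF ℕ} (h : Sm ψ) (h' : Sm χ) : Sm (qand ψ χ) :=
  Sm_neg (Sm_disj (Sm_neg h) (Sm_neg h'))
theorem Sm_qev {ψ : QF ℕ} (h : Sm ψ) : Sm (qev ψ) := Sm_untl Sm_qtt h
theorem Sm_qnx (k : ℕ) {ψ : QF ℕ} (h : Sm ψ) : Sm (qnx k ψ) := by
  induction k with
  | zero => exact h
  | succ k ih => exact ih
theorem Sm_qAll {l : List (QF ℕ)} (h : ∀ ψ ∈ l, Sm ψ) : Sm (qAll l) := by
  induction l with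
  | nil => exact Sm_qtt
  | cons ψ l ih =>
    exact Sm_qand (h _ List.mem_cons_self) (ih fun χ hχ => h χ (List.mem_cons_of_mem _ hχ))
theorem Sm_qEx {l : List (QF ℕ)} (h : ∀ ψ ∈ l, Sm ψ) : Sm (qEx l) := by
  induction l with
  | nil => exact Sm_neg Sm_qtt
  | cons ψ l ih =>
    exact Sm_disj (h _ List.mem_cons_self) (ih fun χ hχ => h χ (List.mem_cons_of_mem _ hχ))
theorem Sm_fm (c : Con) : Sm c.fm := by
  cases c with
  | C x i k => exact Sm_qnx _ (Sm_atom _ (by omega))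
  | D x i y j k =>
    exact Sm_qev (Sm_qand (Sm_atom _ (by omega)) (Sm_qnx _ (Sm_atom _ (by omega))))
  | L x i y j =>
    exact Sm_qev (Sm_qand (Sm_atom _ (by omega)) (Sm_qnx _ (Sm_qev (Sm_atom _ (by omega)))))
theorem Sm_wfm (i : Fin 5) : Sm (wfm i) := by
  have h : Sm (.atom i 1) := Sm_atom _ (by omega)
  exact Sm_qand (Sm_neg h) (Sm_qand (Sm_qev h) (Sm_neg (Sm_qev (Sm_qand h (Sm_qnx _ (Sm_qev h))))))
theorem Sm_body (R : List (List Con)) : Sm (body R) := by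
  refine Sm_qand (Sm_qAll ?_) (Sm_qEx ?_)
  · intro ψ hψ
    obtain ⟨i, -, rfl⟩ := List.mem_map.1 hψ
    exact Sm_wfm i
  · intro ψ hψ
    obtain ⟨r, -, rfl⟩ := List.mem_map.1 hψ
    refine Sm_qAll fun χ hχ => ?_
    obtain ⟨c, -, rfl⟩ := List.mem_map.1 hχ
    exact Sm_fm c

theorem hform_sentence (K n : ℕ) (R : List (List Con)) : (hform K n R).IsSentence := by
  have h : Sm (qand (qgoal K n) (body R)) :=
    Sm_qand (Sm_qand (Sm_qnx _ (Sm_atom _ (by omega))) (Sm_qnx _ (Sm_atom _ (by omega)))) (Sm_body R)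
  refine Set.eq_empty_of_forall_notMem fun x hx => ?_
  simp only [hform, HFormula.freeVars, Set.mem_sdiff, Set.mem_singleton_iff] at hx
  have := h x hx.1.1.1.1.1.1.1.1
  omega

theorem cq_qnx (k : ℕ) (ψ : QF ℕ) : cq (qnx k ψ) = (fun m => Nat.pair 3 m)^[k] (cq ψ) := by
  induction k with
  | zero => rfl
  | succ k ih =>
    rw [Function.iterate_succ_apply', ← ih]
    rfl

theorem hform_primrec (K : ℕ) (R : List (List Con)) : Primrec fun n => ch (hform K n R) := by
  have hp : ∀ (k : ℕ) {f : ℕ → ℕ}, Primrec f → Primrec fun n => Nat.pair k (f n) :=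
    fun k f hf => Primrec₂.natPair.comp (Primrec.const k) hf
  have hp' : ∀ (k : ℕ) {f : ℕ → ℕ}, Primrec f → Primrec fun n => Nat.pair (f n) k :=
    fun k f hf => Primrec₂.natPair.comp hf (Primrec.const k)
  have h0 : Primrec fun n => cq (qnx (n + 1) (.atom 1 0)) := by
    simp only [cq_qnx]
    exact Primrec.nat_iterate Primrec.succ (Primrec.const _)
      (Primrec₂.natPair.comp (Primrec.const 3) Primrec.snd).to₂
  have h1 : Primrec fun n => cq (qgoal K n) := hp 1 (hp 2 (hp _ (hp 1 h0)))
  have h2 : Primrec fun n => cq (qand (qgoal K n) (body R)) := hp 1 (hp 2 (hp' _ (hp 1 h1)))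
  exact hp 0 (hp 0 (hp 1 (hp 1 (hp 0 (hp 2 (hp 0 (hp 3 (hp 0 (hp 4 (hp 0 (hp 5 (hp 0 (hp 6
    (hp 0 (hp 7 (hp 2 h2))))))))))))))))

theorem hardness (N : Set ℕ) (hN : IsRE N) : ManyOneRed N FinStateSatCodes := by
  obtain ⟨f, hf, hN⟩ := hN
  obtain ⟨c, rfl⟩ := Code.exists_code.1 hf
  refine ⟨fun n => ch (hform (tg c) n (baseRules ++ crules c)), (hform_primrec _ _).to_comp,
    fun n => ?_⟩
  rw [hN]
  constructor
  · intro h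
    obtain ⟨ρ, T, hT, hs, hv⟩ := code_complete (R := baseRules ++ crules c)
      (fun r hr => List.mem_append_left _ hr) c (fun r hr => List.mem_append_right _ hr) n _
      (Part.get_mem h)
    exact ⟨_, hform_sentence _ _ _, rfl, hform_complete hT hs hv rfl rfl⟩
  · rintro ⟨φ, -, hφ, S, -, hS⟩
    obtain rfl := ch_inj _ _ hφ
    obtain ⟨T, hT, v, hv, h0, h1⟩ := hform_sound hS
    have := (supp_sound hT v hv).2 c h0
    rw [h1] at this
    exact Part.dom_iff_mem.2 ⟨_, this⟩

end HL

/-- **HyperLTL finite-state satisfiability is Σ⁰₁-complete**: the set of codes is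
recursively enumerable, and every recursively enumerable set many-one reduces to
it via a total computable function. -/
theorem hyperltl_finite_state_sat_Sigma01_complete :
    IsRE FinStateSatCodes ∧ ∀ N : Set ℕ, IsRE N → ManyOneRed N FinStateSatCodes := by
  exact ⟨HL.re_part, fun N hN => HL.hardness N hN⟩
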